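/- arXiv:2306.03595 — 2 statements merged into one kernel-verified Lean document; each statement's English description precedes it below -/
import Mathlib

section
/- For every integer k ≥ 2 and all reals d, δ > 0 there exists ε'₀ > 0 such that for every ε' ∈ (0, ε'₀] there exist ε > 0 and n₀ ∈ ℕ such that the following holds for every integer n ≥ n₀. Let G be a k-partite k-uniform hypergraph with parts V₁,…,V_k satisfying δn ≤ |V_i| ≤ n/δ for all i ∈ [k]. If G is weakly (ε,d)-half-superregular, then G contains a spanning subhypergraph G' (on the same parts) that is weakly (ε', d²/2)-superregular. -/
open Finset
open scoped Classical

/-- Number of ordered pairs `(x,y) ∈ A × B` with `{x,y}` an edge of `G`. -/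
noncomputable def pairCount {V : Type*} (G : SimpleGraph V) (A B : Finset V) : ℕ :=
  ((A ×ˢ B).filter (fun p => G.Adj p.1 p.2)).card

/-- Number of neighbours of `v` in `B`. -/
noncomputable def degIn {V : Type*} (G : SimpleGraph V) (v : V) (B : Finset V) : ℕ :=
  (B.filter (fun w => G.Adj v w)).card

/-- Degree of `v` in `G`. -/
noncomputable def degOf {V : Type*} [Fintype V] (G : SimpleGraph V) (v : V) : ℕ :=
  ((univ : Finset V).filter (fun w => G.Adj v w)).card

/-- Number of edges of `G`. -/
noncomputable def edgeCnt {V : Type*} [Fintype V] (G : SimpleGraph V) : ℕ :=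
  ((univ : Finset (Sym2 V)).filter (fun e => e ∈ G.edgeSet)).card

/-- Number of edges of `H` with one endpoint in `A` and the other in `B`. -/
noncomputable def eBetween {W : Type*} [Fintype W] (H : SimpleGraph W) (A B : Finset W) : ℕ :=
  ((univ : Finset (Sym2 W)).filter
    (fun e => e ∈ H.edgeSet ∧ ∃ x ∈ A, ∃ y ∈ B, e = s(x, y))).card

/-- A graph `H` on `h` vertices is `μ`-separable if there is `X ⊆ V(H)` with `|X| ≤ μ h`
such that every connected component of `H - X` has at most `μ h` vertices. -/
def Separable {W : Type*} [Fintype W] (H : SimpleGraph W) (μ : ℝ) : Prop :=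
  ∃ X : Finset W, (X.card : ℝ) ≤ μ * (Fintype.card W : ℝ) ∧
    ∀ K : (SimpleGraph.induce ((↑X : Set W)ᶜ) H).ConnectedComponent,
      (K.supp.ncard : ℝ) ≤ μ * (Fintype.card W : ℝ)

/-- A transversal copy of `H` in the graph collection `G`. -/
def HasTransversal {V C W : Type*} (G : C → SimpleGraph V) (H : SimpleGraph W) : Prop :=
  ∃ (τ : W → V) (σ : Sym2 W → C),
    Function.Injective τ ∧ Set.InjOn σ H.edgeSet ∧
    ∀ x y, H.Adj x y → (G (σ s(x, y))).Adj (τ x) (τ y)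

/-- Density of a collection of bipartite graphs. -/
noncomputable def colDensity {V C : Type*} (G : C → SimpleGraph V)
    (A B : Finset V) (D : Finset C) : ℝ :=
  (∑ c ∈ D, (pairCount (G c) A B : ℝ)) / ((D.card : ℝ) * (A.card : ℝ) * (B.card : ℝ))

/-- `(ε,d)`-regularity of a collection of bipartite graphs with parts `V₁, V₂`
and colour set `D`. -/
def ColReg {V C : Type*} (ε d : ℝ) (G : C → SimpleGraph V)
    (V₁ V₂ : Finset V) (D : Finset C) : Prop :=
  d ≤ colDensity G V₁ V₂ D ∧
  ∀ V₁' ⊆ V₁, ∀ V₂' ⊆ V₂, ∀ D' ⊆ D,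
    ε * (V₁.card : ℝ) ≤ (V₁'.card : ℝ) → ε * (V₂.card : ℝ) ≤ (V₂'.card : ℝ) →
    ε * (D.card : ℝ) ≤ (D'.card : ℝ) →
    |colDensity G V₁' V₂' D' - colDensity G V₁ V₂ D| < ε

/-- `(ε,d)`-superregularity of a collection of bipartite graphs. -/
def ColSuperReg {V C : Type*} (ε d : ℝ) (G : C → SimpleGraph V)
    (V₁ V₂ : Finset V) (D : Finset C) : Prop :=
  ColReg ε d G V₁ V₂ D ∧
  (∀ v ∈ V₁, d * (V₂.card : ℝ) * (D.card : ℝ) ≤ ∑ c ∈ D, (degIn (G c) v V₂ : ℝ)) ∧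
  (∀ v ∈ V₂, d * (V₁.card : ℝ) * (D.card : ℝ) ≤ ∑ c ∈ D, (degIn (G c) v V₁ : ℝ)) ∧
  (∀ c ∈ D, d * (V₁.card : ℝ) * (V₂.card : ℝ) ≤ (pairCount (G c) V₁ V₂ : ℝ))

/-- `(ε,d)`-half-superregularity of a collection of bipartite graphs. -/
def ColHalfSuperReg {V C : Type*} (ε d : ℝ) (G : C → SimpleGraph V)
    (V₁ V₂ : Finset V) (D : Finset C) : Prop :=
  (∀ V₁' ⊆ V₁, ∀ V₂' ⊆ V₂, ∀ D' ⊆ D,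
    ε * (V₁.card : ℝ) ≤ (V₁'.card : ℝ) → ε * (V₂.card : ℝ) ≤ (V₂'.card : ℝ) →
    ε * (D.card : ℝ) ≤ (D'.card : ℝ) →
    d * (D'.card : ℝ) * (V₁'.card : ℝ) * (V₂'.card : ℝ) ≤
      ∑ c ∈ D', (pairCount (G c) V₁' V₂' : ℝ)) ∧
  (∀ v ∈ V₁, d * (V₂.card : ℝ) * (D.card : ℝ) ≤ ∑ c ∈ D, (degIn (G c) v V₂ : ℝ)) ∧
  (∀ v ∈ V₂, d * (V₁.card : ℝ) * (D.card : ℝ) ≤ ∑ c ∈ D, (degIn (G c) v V₁ : ℝ)) ∧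
  (∀ c ∈ D, d * (V₁.card : ℝ) * (V₂.card : ℝ) ≤ (pairCount (G c) V₁ V₂ : ℝ))

/-- `(ε,d)`-half-superregularity of a bipartite graph (given by an adjacency relation)
with parts `V₁, V₂`. -/
def BipHalfSuper {V : Type*} (ε d : ℝ) (A : V → V → Prop) (V₁ V₂ : Finset V) : Prop :=
  (∀ U₁ ⊆ V₁, ∀ U₂ ⊆ V₂,
    ε * (V₁.card : ℝ) ≤ (U₁.card : ℝ) → ε * (V₂.card : ℝ) ≤ (U₂.card : ℝ) →
    d * (U₁.card : ℝ) * (U₂.card : ℝ) ≤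
      (((U₁ ×ˢ U₂).filter (fun p => A p.1 p.2)).card : ℝ)) ∧
  (∀ x ∈ V₁, d * (V₂.card : ℝ) ≤ ((V₂.filter (fun y => A x y)).card : ℝ)) ∧
  (∀ y ∈ V₂, d * (V₁.card : ℝ) ≤ ((V₁.filter (fun x => A x y)).card : ℝ))

/-- Number of ordered triples `(x₁,x₂,x₃) ∈ U₁ × U₂ × U₃` with `{x₁,x₂,x₃}` an edge. -/
noncomputable def tripCount {V : Type*} (E : Set (Finset V)) (U₁ U₂ U₃ : Finset V) : ℕ :=
  ((U₁ ×ˢ U₂ ×ˢ U₃).filter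
    (fun p => ({p.1, p.2.1, p.2.2} : Finset V) ∈ E)).card

/-- Density of the triple `(U₁,U₂,U₃)` in a `3`-graph. -/
noncomputable def tripDensity {V : Type*} (E : Set (Finset V)) (U₁ U₂ U₃ : Finset V) : ℝ :=
  (tripCount E U₁ U₂ U₃ : ℝ) / ((U₁.card : ℝ) * (U₂.card : ℝ) * (U₃.card : ℝ))

/-- Degree of a vertex in a hypergraph: the number of edges containing it. -/
noncomputable def hDeg {V : Type*} [Fintype V] (E : Set (Finset V)) (v : V) : ℕ :=
  ((univ : Finset (Finset V)).filter (fun e => e ∈ E ∧ v ∈ e)).card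

/-- Weak `(ε,d)`-regularity of a 3-partite triple in a 3-graph. -/
def TripReg {V : Type*} (ε d : ℝ) (E : Set (Finset V)) (V₁ V₂ V₃ : Finset V) : Prop :=
  d ≤ tripDensity E V₁ V₂ V₃ ∧
  ∀ U₁ ⊆ V₁, ∀ U₂ ⊆ V₂, ∀ U₃ ⊆ V₃,
    ε * (V₁.card : ℝ) ≤ (U₁.card : ℝ) → ε * (V₂.card : ℝ) ≤ (U₂.card : ℝ) →
    ε * (V₃.card : ℝ) ≤ (U₃.card : ℝ) →
    |tripDensity E U₁ U₂ U₃ - tripDensity E V₁ V₂ V₃| < ε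

/-- Weak `(ε,d)`-half-superregularity of a 3-partite triple in a 3-graph. -/
def TripHalfSuper {V : Type*} (ε d : ℝ) (E : Set (Finset V)) (V₁ V₂ V₃ : Finset V) : Prop :=
  (∀ U₁ ⊆ V₁, ∀ U₂ ⊆ V₂, ∀ U₃ ⊆ V₃,
    ε * (V₁.card : ℝ) ≤ (U₁.card : ℝ) → ε * (V₂.card : ℝ) ≤ (U₂.card : ℝ) →
    ε * (V₃.card : ℝ) ≤ (U₃.card : ℝ) →
    d * (U₁.card : ℝ) * (U₂.card : ℝ) * (U₃.card : ℝ) ≤ (tripCount E U₁ U₂ U₃ : ℝ)) ∧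
  (∀ x ∈ V₁, d * (V₂.card : ℝ) * (V₃.card : ℝ) ≤ (tripCount E {x} V₂ V₃ : ℝ)) ∧
  (∀ y ∈ V₂, d * (V₁.card : ℝ) * (V₃.card : ℝ) ≤ (tripCount E V₁ {y} V₃ : ℝ)) ∧
  (∀ z ∈ V₃, d * (V₁.card : ℝ) * (V₂.card : ℝ) ≤ (tripCount E V₁ V₂ {z} : ℝ))

/-- A copy of the 1-expansion of `H` in a 3-graph with edge set `E`. -/
def HasExpansionCopy {V W : Type*} (E : Set (Finset V)) (H : SimpleGraph W) : Prop :=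
  ∃ (ρv : W → V) (ρe : Sym2 W → V),
    Function.Injective ρv ∧ Set.InjOn ρe H.edgeSet ∧
    (∀ x, ∀ e ∈ H.edgeSet, ρv x ≠ ρe e) ∧
    ∀ x y, H.Adj x y → ({ρv x, ρv y, ρe s(x, y)} : Finset V) ∈ E

/-- Number of edges (as functions picking one vertex per part) inside the sets `U i`. -/
noncomputable def kCount {V : Type*} {k : ℕ} (E : Set (Fin k → V)) (U : Fin k → Finset V) : ℕ :=
  ((Fintype.piFinset U).filter (fun e => e ∈ E)).card

/-- Density of a `k`-tuple in a `k`-partite `k`-graph. -/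
noncomputable def kDensity {V : Type*} {k : ℕ} (E : Set (Fin k → V)) (U : Fin k → Finset V) : ℝ :=
  (kCount E U : ℝ) / ∏ i, ((U i).card : ℝ)

/-- Degree of `x` as a vertex of the `i`-th part of a `k`-partite `k`-graph. -/
noncomputable def kDegAt {V : Type*} [Fintype V] {k : ℕ} (E : Set (Fin k → V))
    (i : Fin k) (x : V) : ℕ :=
  ((univ : Finset (Fin k → V)).filter (fun e => e ∈ E ∧ e i = x)).card

/-- Weak ε-regularity of a `k`-tuple in a `k`-partite `k`-graph. -/
def KTupleReg {V : Type*} {k : ℕ} (ε : ℝ) (E : Set (Fin k → V)) (Wp : Fin k → Finset V) : Prop :=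
  ∀ U : Fin k → Finset V, (∀ i, U i ⊆ Wp i) →
    (∀ i, ε * ((Wp i).card : ℝ) ≤ ((U i).card : ℝ)) →
    |kDensity E U - kDensity E Wp| < ε

/-- Weak `(ε,d)`-regularity of a `k`-partite `k`-graph with parts `P`. -/
def KReg {V : Type*} {k : ℕ} (ε d : ℝ) (E : Set (Fin k → V)) (P : Fin k → Finset V) : Prop :=
  d ≤ kDensity E P ∧
  ∀ U : Fin k → Finset V, (∀ i, U i ⊆ P i) →
    (∀ i, ε * ((P i).card : ℝ) ≤ ((U i).card : ℝ)) →
    |kDensity E U - kDensity E P| < ε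

/-- Weak `(ε,d)`-superregularity of a `k`-partite `k`-graph with parts `P`. -/
def KSuper {V : Type*} [Fintype V] {k : ℕ} (ε d : ℝ) (E : Set (Fin k → V))
    (P : Fin k → Finset V) : Prop :=
  KReg ε d E P ∧
  ∀ i, ∀ x ∈ P i, d * (∏ j, ((P j).card : ℝ)) / ((P i).card : ℝ) ≤ (kDegAt E i x : ℝ)

/-- Weak `(ε,d)`-half-superregularity of a `k`-partite `k`-graph with parts `P`. -/
def KHalfSuper {V : Type*} [Fintype V] {k : ℕ} (ε d : ℝ) (E : Set (Fin k → V))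
    (P : Fin k → Finset V) : Prop :=
  (∀ U : Fin k → Finset V, (∀ i, U i ⊆ P i) →
    (∀ i, ε * ((P i).card : ℝ) ≤ ((U i).card : ℝ)) →
    d ≤ kDensity E U) ∧
  ∀ i, ∀ x ∈ P i, d * (∏ j, ((P j).card : ℝ)) / ((P i).card : ℝ) ≤ (kDegAt E i x : ℝ)

/-- An `R`-template: vertex clusters `Vc`, colour clusters `Cc i j` (one for each
edge `ij` of `R`), and for each colour `c ∈ Cc i j` a bipartite graph `Ge c i j`
with parts `Vc i`, `Vc j`.  The graph `G_c` of the collection is the union of the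
`Ge c i j` over the edges `ij` of `R` whose colour cluster contains `c`. -/
structure GTemplate (V C : Type*) (r : ℕ) where
  R : SimpleGraph (Fin r)
  Vc : Fin r → Finset V
  Cc : Fin r → Fin r → Finset C
  Ge : C → Fin r → Fin r → SimpleGraph V
  Cc_symm : ∀ i j, Cc i j = Cc j i
  Ge_symm : ∀ c i j, Ge c i j = Ge c j i
  Vc_disj : ∀ i j, i ≠ j → Disjoint (Vc i) (Vc j)
  Cc_support : ∀ i j, ¬ R.Adj i j → Cc i j = ∅
  Ge_support : ∀ c i j, c ∉ Cc i j → Ge c i j = ⊥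
  Ge_bipartite : ∀ c i j x y, (Ge c i j).Adj x y →
    (x ∈ Vc i ∧ y ∈ Vc j) ∨ (x ∈ Vc j ∧ y ∈ Vc i)

namespace GTemplate

variable {V C : Type*} {r : ℕ}

/-- The graph `G_c` of the template: the union of the bipartite pieces. -/
noncomputable def Gc (T : GTemplate V C r) (c : C) : SimpleGraph V :=
  ⨆ i, ⨆ j, T.Ge c i j

/-- `T` is an `R`-template with parameters `(m, ε, d, δ)`. -/
def IsParam (T : GTemplate V C r) (m ε d δ : ℝ) : Prop :=
  (∀ j, m ≤ ((T.Vc j).card : ℝ) ∧ ((T.Vc j).card : ℝ) ≤ m / δ) ∧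
  (∀ i j, T.R.Adj i j → δ * m ≤ ((T.Cc i j).card : ℝ)) ∧
  (∀ i j, T.R.Adj i j →
    ColReg ε d (fun c => T.Ge c i j) (T.Vc i) (T.Vc j) (T.Cc i j))

/-- `T` is a super `R`-template with parameters `(m, ε, d, δ)`. -/
def IsSuperParam (T : GTemplate V C r) (m ε d δ : ℝ) : Prop :=
  (∀ j, m ≤ ((T.Vc j).card : ℝ) ∧ ((T.Vc j).card : ℝ) ≤ m / δ) ∧
  (∀ i j, T.R.Adj i j → δ * m ≤ ((T.Cc i j).card : ℝ)) ∧
  (∀ i j, T.R.Adj i j →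
    ColSuperReg ε d (fun c => T.Ge c i j) (T.Vc i) (T.Vc j) (T.Cc i j))

/-- `T` is a half-super `R`-template with parameters `(m, ε, d, δ)`. -/
def IsHalfSuperParam (T : GTemplate V C r) (m ε d δ : ℝ) : Prop :=
  (∀ j, m ≤ ((T.Vc j).card : ℝ) ∧ ((T.Vc j).card : ℝ) ≤ m / δ) ∧
  (∀ i j, T.R.Adj i j → δ * m ≤ ((T.Cc i j).card : ℝ)) ∧
  (∀ i j, T.R.Adj i j →
    ColHalfSuperReg ε d (fun c => T.Ge c i j) (T.Vc i) (T.Vc j) (T.Cc i j))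

/-- `T` is a semi-super `R`-template with parameters `(m, ε, d, δ)`. -/
def IsSemiSuperParam (T : GTemplate V C r) (m ε d δ : ℝ) : Prop :=
  T.IsParam m ε d δ ∧
  ∀ i j, T.R.Adj i j →
    (∀ v ∈ T.Vc i, d * ((T.Vc j).card : ℝ) * ((T.Cc i j).card : ℝ) ≤
      ∑ c ∈ T.Cc i j, (degIn (T.Ge c i j) v (T.Vc j) : ℝ)) ∧
    (∀ v ∈ T.Vc j, d * ((T.Vc i).card : ℝ) * ((T.Cc i j).card : ℝ) ≤
      ∑ c ∈ T.Cc i j, (degIn (T.Ge c i j) v (T.Vc i) : ℝ))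

/-- The template is rainbow: the colour clusters are pairwise disjoint. -/
def Rainbow (T : GTemplate V C r) : Prop :=
  ∀ i j k l, T.R.Adj i j → T.R.Adj k l → s(i, j) ≠ s(k, l) →
    Disjoint (T.Cc i j) (T.Cc k l)

/-- Adjacency in the `l`-thick graph of the template, between clusters `i` and `j`. -/
def ThickAdj (T : GTemplate V C r) (l : ℝ) (i j : Fin r) (x y : V) : Prop :=
  l * ((T.Cc i j).card : ℝ) ≤
    (((T.Cc i j).filter (fun c => (T.Ge c i j).Adj x y)).card : ℝ)

end GTemplate

/-! ## Statement 5 -/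


lemma aux_two_point (w lam f : ℝ) (hw0 : 0 ≤ w) (hw1 : w ≤ 1) (hl0 : 0 ≤ lam) (hl1 : lam ≤ 1)
    (hf : |f| ≤ 1) :
    w * Real.exp (lam * (f * (1 - w))) + (1 - w) * Real.exp (lam * (f * (0 - w))) ≤
      Real.exp (lam ^ 2) := by
  have key : ∀ y : ℝ, |y| ≤ 1 → Real.exp y ≤ 1 + y + y ^ 2 := by
    intro y hy
    have := Real.abs_exp_sub_one_sub_id_le hy
    have := (abs_le.1 this).2
    linarith
  have hlf : |lam * f| ≤ 1 := by
    rw [abs_mul, abs_of_nonneg hl0]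
    nlinarith [abs_nonneg f]
  have h1 : |lam * (f * (1 - w))| ≤ 1 := by
    rw [← mul_assoc, abs_mul, abs_of_nonneg (by linarith : 0 ≤ 1 - w)]
    nlinarith [abs_nonneg (lam * f)]
  have h2 : |lam * (f * (0 - w))| ≤ 1 := by
    rw [← mul_assoc, abs_mul, zero_sub, abs_neg, abs_of_nonneg hw0]
    nlinarith [abs_nonneg (lam * f)]
  have e1 := mul_le_mul_of_nonneg_left (key _ h1) hw0
  have e2 := mul_le_mul_of_nonneg_left (key _ h2) (by linarith : 0 ≤ 1 - w)
  have e3 := Real.add_one_le_exp (lam ^ 2)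
  have hf2 : f ^ 2 ≤ 1 := by
    rw [← sq_abs]; nlinarith [abs_nonneg f]
  have e4 : lam ^ 2 * f ^ 2 * (w * (1 - w)) ≤ lam ^ 2 := by
    have a1 : lam ^ 2 * f ^ 2 ≤ lam ^ 2 := by nlinarith [sq_nonneg lam]
    have a2 : w * (1 - w) ≤ 1 := by nlinarith
    have a3 : 0 ≤ w * (1 - w) := mul_nonneg hw0 (by linarith)
    nlinarith [mul_nonneg (sq_nonneg lam) (sq_nonneg f)]
  nlinarith

lemma aux_round {α ι : Type*} (w : α → ℝ) (lam : ℝ) (hl0 : 0 ≤ lam) (hl1 : lam ≤ 1)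
    (I : Finset ι) (f : ι → α → ℝ) (hf : ∀ i e, |f i e| ≤ 1) (S : Finset α) :
    (∀ e ∈ S, 0 ≤ w e ∧ w e ≤ 1) →
    ∃ T ⊆ S, ∑ i ∈ I, Real.exp (lam * ∑ e ∈ S, f i e * ((if e ∈ T then (1:ℝ) else 0) - w e)) ≤
      Real.exp (lam ^ 2 * (S.card : ℝ)) * (I.card : ℝ) := by
  induction S using Finset.induction_on with
  | empty => intro _; exact ⟨∅, by simp, by simp⟩
  | insert e S he ih =>
    intro hw
    obtain ⟨T, hT, hTs⟩ := ih (fun x hx => hw x (mem_insert_of_mem hx))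
    obtain ⟨hw0, hw1⟩ := hw e (mem_insert_self _ _)
    set b : ι → ℝ := fun i =>
      Real.exp (lam * ∑ e ∈ S, f i e * ((if e ∈ T then (1:ℝ) else 0) - w e)) with hb
    have heT : e ∉ T := fun h => he (hT h)
    have s0 : ∀ i, Real.exp (lam * ∑ x ∈ insert e S, f i x * ((if x ∈ T then (1:ℝ) else 0) - w x))
        = b i * Real.exp (lam * (f i e * (0 - w e))) := by
      intro i
      rw [sum_insert he, mul_add, Real.exp_add, if_neg heT, mul_comm]
    have s1 : ∀ i, Real.exp (lam * ∑ x ∈ insert e S,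
        f i x * ((if x ∈ insert e T then (1:ℝ) else 0) - w x))
        = b i * Real.exp (lam * (f i e * (1 - w e))) := by
      intro i
      rw [sum_insert he, mul_add, Real.exp_add, if_pos (mem_insert_self _ _), mul_comm]
      congr 3
      apply sum_congr rfl
      intro x hx
      have : x ≠ e := fun h => he (h ▸ hx)
      simp [this]
    have hcomb : w e * (∑ i ∈ I, b i * Real.exp (lam * (f i e * (1 - w e)))) +
        (1 - w e) * (∑ i ∈ I, b i * Real.exp (lam * (f i e * (0 - w e)))) ≤
        Real.exp (lam ^ 2) * ∑ i ∈ I, b i := by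
      rw [mul_sum, mul_sum, mul_sum, ← sum_add_distrib]
      apply sum_le_sum
      intro i _
      have := mul_le_mul_of_nonneg_left (aux_two_point (w e) lam (f i e) hw0 hw1 hl0 hl1 (hf i e))
        (Real.exp_nonneg _ : 0 ≤ b i)
      nlinarith
    have hbound : Real.exp (lam ^ 2) * ∑ i ∈ I, b i ≤
        Real.exp (lam ^ 2 * ((insert e S).card : ℝ)) * (I.card : ℝ) := by
      rw [card_insert_of_notMem he]
      push_cast
      rw [mul_add, mul_one, Real.exp_add, mul_comm (Real.exp (lam ^ 2 * _)), mul_assoc]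
      exact mul_le_mul_of_nonneg_left hTs (Real.exp_nonneg _)
    by_cases hc : (∑ i ∈ I, b i * Real.exp (lam * (f i e * (1 - w e)))) ≤
        Real.exp (lam ^ 2) * ∑ i ∈ I, b i
    · refine ⟨insert e T, insert_subset_insert _ hT, ?_⟩
      simp_rw [s1]
      linarith
    · refine ⟨T, hT.trans (subset_insert _ _), ?_⟩
      simp_rw [s0]
      push Not at hc
      have : (∑ i ∈ I, b i * Real.exp (lam * (f i e * (0 - w e)))) ≤
        Real.exp (lam ^ 2) * ∑ i ∈ I, b i := by
        by_contra hcon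
        push Not at hcon
        rcases eq_or_lt_of_le hw0 with h | h
        · rw [← h] at hcomb hcon; simp at hcomb hcon; linarith
        · nlinarith
      linarith

/-- label of a tuple -/
def lab {V : Type*} {k : ℕ} (c : Fin k → V → ℕ) (x : Fin k → V) : Fin k → ℕ := fun i => c i (x i)

lemma aux_fk {V : Type*} {k : ℕ} (Ω : Finset (Fin k → V)) (g : (Fin k → V) → ℝ)
    (hg : ∀ x, g x ^ 2 ≤ 1) (η : ℝ) (hη : 0 < η) (t : ℕ) :
    (∃ (c : Fin k → V → ℕ) (φ : (Fin k → ℕ) → ℝ), (∀ i v, c i v < 2 ^ t) ∧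
      ∀ s : (Fin k → ℕ) → ℝ, (∀ a, |s a| ≤ 1) → ∀ U : Fin k → Finset V,
        ∑ x ∈ Ω, (if ∀ i, x i ∈ U i then (1:ℝ) else 0) * (s (lab c x) * (g x - φ (lab c x))) ≤
          η * (Ω.card : ℝ)) ∨
    (∃ (c : Fin k → V → ℕ) (φ : (Fin k → ℕ) → ℝ), (∀ i v, c i v < 2 ^ t) ∧
      ∑ x ∈ Ω, (g x - φ (lab c x)) ^ 2 ≤ (1 - t * η ^ 2) * (Ω.card : ℝ)) := by
  induction t with
  | zero =>
    right
    refine ⟨fun _ _ => 0, fun _ => 0, by simp, ?_⟩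
    simp only [sub_zero]
    calc ∑ x ∈ Ω, g x ^ 2 ≤ ∑ x ∈ Ω, 1 := sum_le_sum (fun x _ => hg x)
      _ = _ := by simp
  | succ t ih =>
    have hlt : ∀ n : ℕ, n < 2 ^ t → n < 2 ^ (t + 1) := fun n h => by rw [pow_succ]; omega
    rcases ih with ⟨c, φ, hc, h⟩ | ⟨c, φ, hc, h⟩
    · exact Or.inl ⟨c, φ, fun i v => hlt _ (hc i v), h⟩
    by_cases hgood : ∀ s : (Fin k → ℕ) → ℝ, (∀ a, |s a| ≤ 1) → ∀ U : Fin k → Finset V,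
        ∑ x ∈ Ω, (if ∀ i, x i ∈ U i then (1:ℝ) else 0) * (s (lab c x) * (g x - φ (lab c x))) ≤
          η * (Ω.card : ℝ)
    · exact Or.inl ⟨c, φ, fun i v => hlt _ (hc i v), hgood⟩
    right
    push Not at hgood
    obtain ⟨s, hs, U, hU⟩ := hgood
    refine ⟨fun i v => 2 * c i v + (if v ∈ U i then 1 else 0),
      fun a => φ (fun i => a i / 2) + η * ((if ∀ i, a i % 2 = 1 then (1:ℝ) else 0) *
        s (fun i => a i / 2)), ?_, ?_⟩
    · intro i v
      have := hc i v
      rw [pow_succ]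
      dsimp only
      split_ifs <;> omega
    · have hdiv : ∀ x : Fin k → V,
          (fun i => lab (fun i v => 2 * c i v + (if v ∈ U i then 1 else 0)) x i / 2) = lab c x := by
        intro x; funext i
        simp only [lab]
        split_ifs <;> omega
      have hmod : ∀ x : Fin k → V,
          (∀ i, lab (fun i v => 2 * c i v + (if v ∈ U i then 1 else 0)) x i % 2 = 1) ↔
            ∀ i, x i ∈ U i := by
        intro x
        apply forall_congr'
        intro i
        simp only [lab]
        split_ifs with h
        · simp [h]; 
        · simp [h]
      simp only [hdiv, hmod]
      set F : (Fin k → V) → ℝ := fun x => (if ∀ i, x i ∈ U i then (1:ℝ) else 0) with hF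
      have hpt : ∀ x ∈ Ω, (g x - (φ (lab c x) + η * (F x * s (lab c x)))) ^ 2 ≤
          (g x - φ (lab c x)) ^ 2 - 2 * η * (F x * (s (lab c x) * (g x - φ (lab c x)))) + η ^ 2 := by
        intro x _
        have : (F x * s (lab c x)) ^ 2 ≤ 1 := by
          rw [mul_pow]
          have h1 : s (lab c x) ^ 2 ≤ 1 := by
            rw [← sq_abs]; nlinarith [abs_nonneg (s (lab c x)), hs (lab c x)]
          simp only [hF]
          split_ifs <;> simp [hs]
        nlinarith [sq_nonneg η]
      refine (sum_le_sum hpt).trans ?_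
      rw [sum_add_distrib, sum_sub_distrib, ← mul_sum, sum_const, nsmul_eq_mul]
      push_cast
      have := mul_lt_mul_of_pos_left hU hη
      nlinarith

lemma aux_avg {V : Type*} {k : ℕ} (Ω : Finset (Fin k → V)) (g : (Fin k → V) → ℝ)
    (η : ℝ) (c : Fin k → V → ℕ) (φ : (Fin k → ℕ) → ℝ)
    (h : ∀ s : (Fin k → ℕ) → ℝ, (∀ a, |s a| ≤ 1) → ∀ U : Fin k → Finset V,
        ∑ x ∈ Ω, (if ∀ i, x i ∈ U i then (1:ℝ) else 0) * (s (lab c x) * (g x - φ (lab c x))) ≤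
          η * (Ω.card : ℝ)) (D : (Fin k → ℕ) → ℝ)
    (hD : ∀ a, D a * ((Ω.filter (fun x => lab c x = a)).card : ℝ) =
      ∑ x ∈ Ω.filter (fun x => lab c x = a), g x)
    (hΩ : ∃ P : Fin k → Finset V, ∀ x ∈ Ω, ∀ i, x i ∈ P i)
    (s : (Fin k → ℕ) → ℝ) (hs : ∀ a, |s a| ≤ 1) (U : Fin k → Finset V) :
    ∑ x ∈ Ω, (if ∀ i, x i ∈ U i then (1:ℝ) else 0) * (s (lab c x) * (g x - D (lab c x))) ≤
          2 * η * (Ω.card : ℝ) := by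
  obtain ⟨P, hP⟩ := hΩ
  set F : (Fin k → V) → ℝ := fun x => (if ∀ i, x i ∈ U i then (1:ℝ) else 0) with hF
  have hF0 : ∀ x, 0 ≤ F x := fun x => by simp only [hF]; split_ifs <;> norm_num
  have hF1 : ∀ x, F x ≤ 1 := fun x => by simp only [hF]; split_ifs <;> norm_num
  set B : (Fin k → ℕ) → Finset (Fin k → V) := fun a => Ω.filter (fun x => lab c x = a) with hB
  set r : (Fin k → ℕ) → ℝ := fun a => - (s a * ((∑ x ∈ B a, F x) / ((B a).card : ℝ))) with hr
  have hr1 : ∀ a, |r a| ≤ 1 := by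
    intro a
    simp only [hr, abs_neg, abs_mul]
    have h0 : 0 ≤ (∑ x ∈ B a, F x) / ((B a).card : ℝ) :=
      div_nonneg (sum_nonneg fun x _ => hF0 x) (Nat.cast_nonneg _)
    have h1 : (∑ x ∈ B a, F x) / ((B a).card : ℝ) ≤ 1 := by
      apply div_le_one_of_le₀ _ (Nat.cast_nonneg _)
      calc ∑ x ∈ B a, F x ≤ ∑ x ∈ B a, 1 := sum_le_sum fun x _ => hF1 x
        _ = _ := by simp
    rw [abs_of_nonneg h0]
    exact mul_le_one₀ (hs a) h0 h1
  have e1 := h s hs U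
  have e2 := h r hr1 P
  have e2' : ∑ x ∈ Ω, (if ∀ i, x i ∈ P i then (1:ℝ) else 0) *
      (r (lab c x) * (g x - φ (lab c x))) = ∑ x ∈ Ω, F x * (s (lab c x) * (φ (lab c x) - D (lab c x))) := by
    rw [← sum_fiberwise_of_maps_to (t := Ω.image (lab c)) (g := lab c)
      (fun x hx => mem_image_of_mem _ hx)]
    rw [← sum_fiberwise_of_maps_to (s := Ω) (t := Ω.image (lab c)) (g := lab c)
      (fun x hx => mem_image_of_mem _ hx) (fun x => F x * (s (lab c x) * (φ (lab c x) - D (lab c x))))]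
    apply sum_congr rfl
    intro a ha
    have hne : ((B a).card : ℝ) ≠ 0 := by
      obtain ⟨x, hx, rfl⟩ := mem_image.1 ha
      have : x ∈ B (lab c x) := by simp [hB, hx]
      exact_mod_cast (card_pos.2 ⟨x, this⟩).ne'
    have l1 : ∑ x ∈ B a, (if ∀ i, x i ∈ P i then (1:ℝ) else 0) *
      (r (lab c x) * (g x - φ (lab c x))) = r a * (∑ x ∈ B a, g x - (B a).card * φ a) := by
      rw [← nsmul_eq_mul, ← sum_const, ← sum_sub_distrib, mul_sum]
      apply sum_congr rfl
      intro x hx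
      obtain ⟨hx1, hx2⟩ := mem_filter.1 hx
      rw [if_pos (hP x hx1), hx2, one_mul]
    have l2 : ∑ x ∈ B a, F x * (s (lab c x) * (φ (lab c x) - D (lab c x))) =
        (∑ x ∈ B a, F x) * (s a * (φ a - D a)) := by
      rw [sum_mul]
      apply sum_congr rfl
      intro x hx
      obtain ⟨hx1, hx2⟩ := mem_filter.1 hx
      rw [hx2]
    change ∑ x ∈ B a, _ = ∑ x ∈ B a, _
    rw [l1, l2, ← hD a]
    simp only [hr]
    change _ * (D a * ((B a).card : ℝ) - _) = _
    field_simp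
    ring
  have e3 : ∑ x ∈ Ω, F x * (s (lab c x) * (g x - D (lab c x))) =
      ∑ x ∈ Ω, F x * (s (lab c x) * (g x - φ (lab c x))) +
      ∑ x ∈ Ω, F x * (s (lab c x) * (φ (lab c x) - D (lab c x))) := by
    rw [← sum_add_distrib]
    apply sum_congr rfl
    intro x _
    ring
  rw [e3, ← e2']
  linarith


lemma aux_weights {V : Type*} {k : ℕ} (P : Fin k → Finset V) (E : Set (Fin k → V))
    (d c₀ ε η : ℝ) (T : ℕ) (hη : 0 < η) (hT : 1 < T * η ^ 2) (hc0 : 0 < c₀) (hcd : c₀ ≤ d)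
    (hc1 : c₀ ≤ 1)
    (hε0 : 0 < ε) (hε : ((2:ℝ) ^ T) ^ k * ε ≤ η)
    (hN : 0 < (Fintype.piFinset P).card)
    (hE : ∀ U : Fin k → Finset V, (∀ i, U i ⊆ P i) →
      (∀ i, ε * ((P i).card : ℝ) ≤ ((U i).card : ℝ)) → d ≤ kDensity E U) :
    ∃ w : (Fin k → V) → ℝ, (∀ x, 0 ≤ w x ∧ w x ≤ 1) ∧ (∀ x, x ∉ E → w x = 0) ∧
      ∀ U : Fin k → Finset V,
        |∑ x ∈ Fintype.piFinset P, (if ∀ i, x i ∈ U i then (1:ℝ) else 0) * (w x - c₀)| ≤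
          3 * η * ((Fintype.piFinset P).card : ℝ) := by
  set Ω := Fintype.piFinset P with hΩ
  have hNr : (0:ℝ) < (Ω.card : ℝ) := by exact_mod_cast hN
  set g : (Fin k → V) → ℝ := fun x => if x ∈ E then 1 else 0 with hg
  have hg01 : ∀ x, 0 ≤ g x ∧ g x ≤ 1 := fun x => by simp only [hg]; split_ifs <;> norm_num
  obtain ⟨c, φ, hc, hreg⟩ : ∃ (c : Fin k → V → ℕ) (φ : (Fin k → ℕ) → ℝ), (∀ i v, c i v < 2 ^ T) ∧
      ∀ s : (Fin k → ℕ) → ℝ, (∀ a, |s a| ≤ 1) → ∀ U : Fin k → Finset V,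
        ∑ x ∈ Ω, (if ∀ i, x i ∈ U i then (1:ℝ) else 0) * (s (lab c x) * (g x - φ (lab c x))) ≤
          η * (Ω.card : ℝ) := by
    rcases aux_fk Ω g (fun x => by nlinarith [hg01 x]) η hη T with h | ⟨c, φ, hc, h⟩
    · exact h
    · exfalso
      have h0 : 0 ≤ ∑ x ∈ Ω, (g x - φ (lab c x)) ^ 2 := sum_nonneg fun x _ => sq_nonneg _
      nlinarith
  set Q : (Fin k → ℕ) → Fin k → Finset V := fun a i => (P i).filter (fun v => c i v = a i) with hQ
  have hB : ∀ a, Ω.filter (fun x => lab c x = a) = Fintype.piFinset (Q a) := by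
    intro a
    ext x
    simp only [hΩ, hQ, mem_filter, Fintype.mem_piFinset, lab, funext_iff]
    exact forall_and.symm
  have hcard : ∀ a, ((Ω.filter (fun x => lab c x = a)).card : ℝ) = ∏ i, ((Q a i).card : ℝ) := by
    intro a; rw [hB, Fintype.card_piFinset]; push_cast; rfl
  have hNprod : (Ω.card : ℝ) = ∏ i, ((P i).card : ℝ) := by
    rw [hΩ, Fintype.card_piFinset]; push_cast; rfl
  set D : (Fin k → ℕ) → ℝ := fun a => kDensity E (Q a) with hDdef
  have hD : ∀ a, D a * ((Ω.filter (fun x => lab c x = a)).card : ℝ) =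
      ∑ x ∈ Ω.filter (fun x => lab c x = a), g x := by
    intro a
    have : ∑ x ∈ Ω.filter (fun x => lab c x = a), g x = kCount E (Q a) := by
      simp only [hg, hB, kCount, sum_boole]
    rw [this]
    by_cases h0 : ∏ i, ((Q a i).card : ℝ) = 0
    · rw [hcard, h0, mul_zero]
      have h1 : (Fintype.piFinset (Q a)).card = 0 := by
        have := hcard a
        rw [h0, hB] at this
        exact_mod_cast this
      have h2 : kCount E (Q a) ≤ (Fintype.piFinset (Q a)).card := card_filter_le _ _
      have : kCount E (Q a) = 0 := by omega
      rw [this]; simp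
    · rw [hcard]
      simp only [hDdef, kDensity]
      field_simp
  set good : (Fin k → ℕ) → Prop := fun a => ∀ i, ε * ((P i).card : ℝ) ≤ ((Q a i).card : ℝ)
  have hDgood : ∀ a, good a → d ≤ D a := fun a ha => hE _ (fun i => filter_subset _ _) ha
  set h : (Fin k → ℕ) → ℝ := fun a => if good a then c₀ / D a else 0 with hh
  have hh01 : ∀ a, 0 ≤ h a ∧ h a ≤ 1 := by
    intro a
    simp only [hh]
    split_ifs with hga
    · have := hDgood a hga
      exact ⟨div_nonneg hc0.le (by linarith), div_le_one_of_le₀ (by linarith) (by linarith)⟩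
    · norm_num
  have hbad : ∑ x ∈ Ω, (if good (lab c x) then (0:ℝ) else 1) ≤ η * (Ω.card : ℝ) := by
    rw [← sum_fiberwise_of_maps_to (t := Fintype.piFinset (fun _ : Fin k => range (2 ^ T)))
      (g := lab c) (fun x hx => by
        rw [Fintype.mem_piFinset]; intro i; exact mem_range.2 (hc i (x i)))]
    calc _ ≤ ∑ a ∈ Fintype.piFinset (fun _ : Fin k => range (2 ^ T)), ε * (Ω.card : ℝ) := by
          apply sum_le_sum
          intro a _
          have : ∑ x ∈ Ω.filter (fun x => lab c x = a), (if good (lab c x) then (0:ℝ) else 1) =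
              ∑ x ∈ Ω.filter (fun x => lab c x = a), (if good a then (0:ℝ) else 1) := by
            apply sum_congr rfl
            intro x hx
            rw [(mem_filter.1 hx).2]
          rw [this, sum_const, nsmul_eq_mul]
          split_ifs with hga
          · simp; positivity
          · rw [mul_one, hcard, hNprod]
            simp only [good] at hga
            push Not at hga
            obtain ⟨i, hi⟩ := hga
            rw [← mul_prod_erase univ _ (mem_univ i), ← mul_prod_erase univ (fun i => ((P i).card:ℝ)) (mem_univ i), ← mul_assoc]
            apply mul_le_mul hi.le _ (prod_nonneg fun _ _ => Nat.cast_nonneg _) (by positivity)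
            apply prod_le_prod (fun _ _ => Nat.cast_nonneg _)
            intro j _
            exact_mod_cast card_le_card (filter_subset _ _)
      _ = (((2:ℝ) ^ T) ^ k * ε) * (Ω.card : ℝ) := by
          rw [sum_const, nsmul_eq_mul, Fintype.card_piFinset]
          simp
          ring
      _ ≤ _ := mul_le_mul_of_nonneg_right hε hNr.le
  refine ⟨fun x => h (lab c x) * g x, ?_, ?_, ?_⟩
  · intro x
    exact ⟨mul_nonneg (hh01 _).1 (hg01 x).1, mul_le_one₀ (hh01 _).2 (hg01 x).1 (hg01 x).2⟩
  · intro x hx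
    simp [hg, hx]
  · intro U
    set F : (Fin k → V) → ℝ := fun x => (if ∀ i, x i ∈ U i then (1:ℝ) else 0) with hF
    have hF0 : ∀ x, 0 ≤ F x := fun x => by simp only [hF]; split_ifs <;> norm_num
    have hF1 : ∀ x, F x ≤ 1 := fun x => by simp only [hF]; split_ifs <;> norm_num
    have hΩP : ∃ P : Fin k → Finset V, ∀ x ∈ Ω, ∀ i, x i ∈ P i :=
      ⟨P, fun x hx => Fintype.mem_piFinset.1 hx⟩
    have e1 := aux_avg Ω g η c φ hreg D hD hΩP h
      (fun a => by rw [abs_of_nonneg (hh01 a).1]; exact (hh01 a).2) U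
    have e2 := aux_avg Ω g η c φ hreg D hD hΩP (fun a => - h a)
      (fun a => by rw [abs_neg, abs_of_nonneg (hh01 a).1]; exact (hh01 a).2) U
    have e2' : ∑ x ∈ Ω, F x * (-h (lab c x) * (g x - D (lab c x))) =
        - ∑ x ∈ Ω, F x * (h (lab c x) * (g x - D (lab c x))) := by
      rw [← sum_neg_distrib]; apply sum_congr rfl; intros; ring
    rw [e2'] at e2
    have e3 : ∑ x ∈ Ω, F x * (h (lab c x) * g x - c₀) =
        ∑ x ∈ Ω, F x * (h (lab c x) * (g x - D (lab c x))) +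
        ∑ x ∈ Ω, F x * (h (lab c x) * D (lab c x) - c₀) := by
      rw [← sum_add_distrib]; apply sum_congr rfl; intros; ring
    have e4 : |∑ x ∈ Ω, F x * (h (lab c x) * D (lab c x) - c₀)| ≤ η * (Ω.card : ℝ) := by
      refine (abs_sum_le_sum_abs _ _).trans (le_trans (sum_le_sum ?_) hbad)
      intro x _
      rw [abs_mul, abs_of_nonneg (hF0 x)]
      simp only [hh]
      split_ifs with hga
      · have := hDgood _ hga
        rw [div_mul_cancel₀ _ (by linarith)]
        simp
      · rw [zero_mul, zero_sub, abs_neg, abs_of_pos hc0]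
        exact mul_le_one₀ (hF1 x) hc0.le hc1
    rw [e3]
    have e5 := abs_le.1 e4
    rw [abs_le]
    constructor <;> linarith [e5.1, e5.2]

lemma aux_sparse {V : Type*} {k : ℕ} (P : Fin k → Finset V) (E : Set (Fin k → V))
    (w : (Fin k → V) → ℝ) (hw : ∀ x, 0 ≤ w x ∧ w x ≤ 1) (hwE : ∀ x, x ∉ E → w x = 0)
    (η : ℝ) (hη : 0 < η) (hη1 : η ≤ 1)
    (hbig : 2 * (2:ℝ) ^ (∑ i, (P i).card) <
      Real.exp (η ^ 2 / 4 * ((Fintype.piFinset P).card : ℝ))) :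
    ∃ E' : Set (Fin k → V), E' ⊆ E ∧ ∀ U : Fin k → Finset V, (∀ i, U i ⊆ P i) →
      |∑ x ∈ Fintype.piFinset P, (if ∀ i, x i ∈ U i then (1:ℝ) else 0) *
        ((if x ∈ E' then 1 else 0) - w x)| ≤ η * ((Fintype.piFinset P).card : ℝ) := by
  set Ω := Fintype.piFinset P with hΩ
  set S := Ω.filter (fun x => x ∈ E) with hS
  set I : Finset ((Fin k → Finset V) × Bool) :=
    (Fintype.piFinset (fun i => (P i).powerset)) ×ˢ univ with hI
  have hIcard : (I.card : ℝ) = 2 * (2:ℝ) ^ (∑ i, (P i).card) := by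
    simp [hI, card_product, Fintype.card_piFinset, prod_pow_eq_pow_sum, mul_comm]
  set F : (Fin k → Finset V) → (Fin k → V) → ℝ :=
    fun U x => (if ∀ i, x i ∈ U i then (1:ℝ) else 0) with hF
  obtain ⟨T, hTS, hT⟩ := aux_round w (η / 2) (by linarith) (by linarith) I
    (fun u x => (if u.2 then 1 else -1) * F u.1 x)
    (by intro u x; simp only [hF]; split_ifs <;> simp) S (fun e _ => hw e)
  obtain ⟨E₁, hE₁⟩ : ∃ E₁ : Set (Fin k → V), ∀ x, x ∈ E₁ ↔ x ∈ T := ⟨↑T, by simp⟩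
  refine ⟨E₁, ?_, ?_⟩
  · intro x hx; exact (mem_filter.1 (hTS ((hE₁ x).1 hx))).2
  · intro U hU
    have hsum : ∑ x ∈ Ω, F U x * ((if x ∈ E₁ then 1 else 0) - w x) =
        ∑ x ∈ S, F U x * ((if x ∈ T then 1 else 0) - w x) := by
      rw [hS, sum_filter]
      apply sum_congr rfl
      intro x _
      by_cases h3 : x ∈ E
      · rw [if_pos h3]; simp only [hE₁]
      · have h4 : x ∉ T := fun h => h3 (mem_filter.1 (hTS h)).2
        rw [if_neg h3, hwE x h3]
        simp [hE₁, h4]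
    have hSc : (S.card : ℝ) ≤ Ω.card := by exact_mod_cast card_filter_le _ _
    have hone : ∀ b : Bool, (if b then (1:ℝ) else -1) *
        ∑ x ∈ S, F U x * ((if x ∈ T then 1 else 0) - w x) ≤ η * (Ω.card : ℝ) := by
      intro b
      by_contra hcon
      push Not at hcon
      have hmem : (U, b) ∈ I := by
        simp only [hI, mem_product, mem_univ, and_true, Fintype.mem_piFinset, mem_powerset]
        exact hU
      have h1 : Real.exp (η / 2 * ((if b then (1:ℝ) else -1) *
          ∑ x ∈ S, F U x * ((if x ∈ T then 1 else 0) - w x))) ≤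
          Real.exp ((η / 2) ^ 2 * (S.card : ℝ)) * (2 * (2:ℝ) ^ (∑ i, (P i).card)) := by
        rw [← hIcard]
        refine le_trans ?_ hT
        refine le_trans (le_of_eq ?_) (single_le_sum (fun i _ => Real.exp_nonneg _) hmem)
        rw [mul_sum]
        simp only [mul_assoc]
        congr!
      have h2 : Real.exp (η / 2 * (η * (Ω.card : ℝ))) ≤ Real.exp (η / 2 *
          ((if b then (1:ℝ) else -1) * ∑ x ∈ S, F U x * ((if x ∈ T then 1 else 0) - w x))) :=
        Real.exp_le_exp.2 (mul_le_mul_of_nonneg_left hcon.le (by linarith))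
      have h3 : Real.exp ((η / 2) ^ 2 * (S.card : ℝ)) ≤ Real.exp (η ^ 2 / 4 * (Ω.card : ℝ)) := by
        apply Real.exp_le_exp.2
        have := mul_le_mul_of_nonneg_left hSc (sq_nonneg (η / 2))
        linarith
      have h4 : Real.exp ((η / 2) ^ 2 * (S.card : ℝ)) * (2 * (2:ℝ) ^ (∑ i, (P i).card)) <
          Real.exp (η ^ 2 / 4 * (Ω.card : ℝ)) * Real.exp (η ^ 2 / 4 * (Ω.card : ℝ)) :=
        mul_lt_mul' h3 hbig (by positivity) (Real.exp_pos _)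
      rw [← Real.exp_add] at h4
      have h5 : η ^ 2 / 4 * (Ω.card : ℝ) + η ^ 2 / 4 * (Ω.card : ℝ) = η / 2 * (η * (Ω.card : ℝ)) := by
        ring
      rw [h5] at h4
      linarith
    change |∑ x ∈ Ω, F U x * ((if x ∈ E₁ then 1 else 0) - w x)| ≤ _
    rw [hsum, abs_le]
    have p1 := hone true
    have p2 := hone false
    simp at p1 p2
    constructor <;> linarith

lemma aux_count {V : Type*} {k : ℕ} (P U : Fin k → Finset V) (hU : ∀ i, U i ⊆ P i)
    (E : Set (Fin k → V)) (c₀ : ℝ) :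
    ∑ x ∈ Fintype.piFinset P, (if ∀ i, x i ∈ U i then (1:ℝ) else 0) *
        ((if x ∈ E then 1 else 0) - c₀) = (kCount E U : ℝ) - c₀ * ∏ i, ((U i).card : ℝ) := by
  have h1 : (Fintype.piFinset P).filter (fun x => ∀ i, x i ∈ U i) = Fintype.piFinset U := by
    ext x
    simp only [mem_filter, Fintype.mem_piFinset]
    exact ⟨fun h => h.2, fun h => ⟨fun i => hU i (h i), h⟩⟩
  simp only [ite_mul, one_mul, zero_mul]
  rw [← sum_filter, h1, sum_sub_distrib, sum_const, Fintype.card_piFinset, sum_boole, nsmul_eq_mul]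
  push_cast
  rw [mul_comm c₀]
  rfl

lemma aux_deg {V : Type*} [Fintype V] {k : ℕ} (P : Fin k → Finset V) (E : Set (Fin k → V))
    (hE : ∀ e ∈ E, ∀ i, e i ∈ P i) (i : Fin k) (A : Finset V) :
    kCount E (Function.update P i A) = ∑ x ∈ A, kDegAt E i x := by
  unfold kCount kDegAt
  rw [card_eq_sum_card_fiberwise (f := fun e => e i) (t := A)]
  · apply sum_congr rfl
    intro x hx
    congr 1
    ext e
    simp only [mem_filter, Fintype.mem_piFinset, mem_univ, true_and]
    constructor
    · rintro ⟨⟨_, h2⟩, h3⟩; exact ⟨h2, h3⟩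
    · rintro ⟨h2, h3⟩
      refine ⟨⟨fun j => ?_, h2⟩, h3⟩
      by_cases hj : j = i
      · subst hj; simpa [h3] using hx
      · simpa [hj] using hE e h2 j
  · intro e he
    have := (Fintype.mem_piFinset.1 (mem_filter.1 he).1) i
    simpa using this

lemma aux_prod_update {V : Type*} {k : ℕ} (P : Fin k → Finset V) (i : Fin k) (A : Finset V) :
    ∏ j, ((Function.update P i A j).card : ℝ) =
      (A.card : ℝ) * ∏ j ∈ univ.erase i, ((P j).card : ℝ) := by
  rw [← mul_prod_erase univ _ (mem_univ i)]
  congr 1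
  · simp
  · apply prod_congr rfl
    intro j hj
    simp [(mem_erase.1 hj).1]

lemma aux_fix {V : Type*} [Fintype V] {k : ℕ} (P : Fin k → Finset V) (E E₁ : Set (Fin k → V))
    (hE : ∀ e ∈ E, ∀ i, e i ∈ P i) (hE₁ : E₁ ⊆ E) (c₀ d β θ : ℝ) (hβ : 0 < β)
    (hcd : c₀ - β ≤ d)
    (hdeg : ∀ i, ∀ x ∈ P i, d * (∏ j, ((P j).card : ℝ)) / ((P i).card : ℝ) ≤ (kDegAt E i x : ℝ))
    (h : ∀ U : Fin k → Finset V, (∀ i, U i ⊆ P i) →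
      |(kCount E₁ U : ℝ) - c₀ * ∏ i, ((U i).card : ℝ)| ≤ θ * ∏ i, ((P i).card : ℝ)) :
    ∃ E' : Set (Fin k → V), E' ⊆ E ∧
      (∀ i, ∀ x ∈ P i, (c₀ - β) * (∏ j, ((P j).card : ℝ)) / ((P i).card : ℝ) ≤ (kDegAt E' i x : ℝ)) ∧
      ∀ U : Fin k → Finset V, (∀ i, U i ⊆ P i) →
      |(kCount E' U : ℝ) - c₀ * ∏ i, ((U i).card : ℝ)| ≤
        (θ + k * (θ / β)) * ∏ i, ((P i).card : ℝ) := by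
  set N : ℝ := ∏ i, ((P i).card : ℝ) with hN
  have hN0 : 0 ≤ N := prod_nonneg fun _ _ => Nat.cast_nonneg _
  set A : Fin k → Finset V := fun i =>
    (P i).filter (fun x => (kDegAt E₁ i x : ℝ) < (c₀ - β) * N / ((P i).card : ℝ)) with hA
  set R : Fin k → ℝ := fun i => ∏ j ∈ univ.erase i, ((P j).card : ℝ) with hR
  have hR0 : ∀ i, 0 ≤ R i := fun i => prod_nonneg fun _ _ => Nat.cast_nonneg _
  have hNR : ∀ i, N = ((P i).card : ℝ) * R i := fun i =>
    (mul_prod_erase univ (fun j => ((P j).card : ℝ)) (mem_univ i)).symm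
  have hAP : ∀ i, A i ⊆ P i := fun i => filter_subset _ _
  have hupd : ∀ i j, Function.update P i (A i) j ⊆ P j := by
    intro i j
    by_cases hj : j = i
    · subst hj; simpa using hAP j
    · simp [hj]
  have hAsmall : ∀ i, ((A i).card : ℝ) * R i ≤ θ / β * N := by
    intro i
    have h1 := (abs_le.1 (h _ (hupd i))).1
    rw [aux_prod_update, aux_deg P E₁ (fun e he => hE e (hE₁ he))] at h1
    push_cast at h1
    have h2 : ∑ x ∈ A i, (kDegAt E₁ i x : ℝ) ≤ ∑ x ∈ A i, (c₀ - β) * R i := by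
      apply sum_le_sum
      intro x hx
      obtain ⟨hx1, hx2⟩ := mem_filter.1 hx
      have hp : ((P i).card : ℝ) ≠ 0 := by exact_mod_cast (card_pos.2 ⟨x, hx1⟩).ne'
      have : (c₀ - β) * N / ((P i).card : ℝ) = (c₀ - β) * R i := by
        rw [hNR i]; field_simp
      rw [this] at hx2
      exact hx2.le
    rw [sum_const, nsmul_eq_mul] at h2
    rw [div_mul_eq_mul_div, le_div_iff₀ hβ]
    change -(θ * N) ≤ _ - c₀ * (_ * R i) at h1
    nlinarith
  obtain ⟨E₂, hE₂⟩ : ∃ E₂ : Set (Fin k → V), ∀ e, e ∈ E₂ ↔ (e ∈ E₁ ∨ (e ∈ E ∧ ∃ i, e i ∈ A i)) :=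
    ⟨{e | e ∈ E₁ ∨ (e ∈ E ∧ ∃ i, e i ∈ A i)}, fun e => Iff.rfl⟩
  refine ⟨E₂, ?_, ?_, ?_⟩
  · intro e he
    rcases (hE₂ e).1 he with he | he
    · exact hE₁ he
    · exact he.1
  · intro i x hx
    by_cases hxA : x ∈ A i
    · have h1 : kDegAt E i x ≤ kDegAt E₂ i x := by
        apply card_le_card
        intro e he
        obtain ⟨_, he1, he2⟩ := mem_filter.1 he
        exact mem_filter.2 ⟨mem_univ _, (hE₂ e).2 (Or.inr ⟨he1, i, he2 ▸ hxA⟩), he2⟩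
      have h1' : (kDegAt E i x : ℝ) ≤ kDegAt E₂ i x := by
        exact_mod_cast h1
      refine le_trans ?_ ((hdeg i x hx).trans h1')
      exact div_le_div_of_nonneg_right (mul_le_mul_of_nonneg_right hcd hN0) (Nat.cast_nonneg _)
    · have h1 : kDegAt E₁ i x ≤ kDegAt E₂ i x := by
        apply card_le_card
        intro e he
        obtain ⟨_, he1, he2⟩ := mem_filter.1 he
        exact mem_filter.2 ⟨mem_univ _, (hE₂ e).2 (Or.inl he1), he2⟩
      have h1' : (kDegAt E₁ i x : ℝ) ≤ kDegAt E₂ i x := by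
        exact_mod_cast h1
      refine le_trans ?_ h1'
      by_contra hcon
      exact hxA (mem_filter.2 ⟨hx, not_le.1 hcon⟩)
  · intro U hU
    have lo : kCount E₁ U ≤ kCount E₂ U := by
      apply card_le_card
      intro e he
      obtain ⟨he1, he2⟩ := mem_filter.1 he
      exact mem_filter.2 ⟨he1, (hE₂ e).2 (Or.inl he2)⟩
    have hi : kCount E₂ U ≤
        kCount E₁ U + ∑ i, (Fintype.piFinset (Function.update P i (A i))).card := by
      calc _ ≤ (((Fintype.piFinset U).filter (fun e => e ∈ E₁)) ∪
            (univ.biUnion fun i => Fintype.piFinset (Function.update P i (A i)))).card := by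
            apply card_le_card
            intro e he
            obtain ⟨he1, he3⟩ := mem_filter.1 he
            rcases (hE₂ e).1 he3 with he2 | ⟨he2, i, hi⟩
            · exact mem_union_left _ (mem_filter.2 ⟨he1, he2⟩)
            · apply mem_union_right
              refine mem_biUnion.2 ⟨i, mem_univ _, Fintype.mem_piFinset.2 fun j => ?_⟩
              by_cases hj : j = i
              · subst hj; simpa using hi
              · simpa [hj] using hE e he2 j
        _ ≤ _ := (card_union_le _ _).trans (Nat.add_le_add_left card_biUnion_le _)
    have lo' : (kCount E₁ U : ℝ) ≤ kCount E₂ U := by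
      exact_mod_cast lo
    have hi' : (kCount E₂ U : ℝ) ≤
        kCount E₁ U + ∑ i, ((A i).card : ℝ) * R i := by
      refine le_trans (Nat.cast_le.2 hi) (le_of_eq ?_)
      push_cast
      congr 1
      apply sum_congr rfl
      intro i _
      rw [← aux_prod_update, Fintype.card_piFinset]
      push_cast
      rfl
    have hs : ∑ i, ((A i).card : ℝ) * R i ≤ k * (θ / β * N) := by
      refine (sum_le_sum fun i _ => hAsmall i).trans ?_
      simp
    have hs0 : 0 ≤ ∑ i, ((A i).card : ℝ) * R i :=
      sum_nonneg fun i _ => mul_nonneg (Nat.cast_nonneg _) (hR0 i)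
    have := abs_le.1 (h U hU)
    rw [abs_le]
    constructor <;> nlinarith [this.1, this.2]


lemma aux_two_pow (m : ℕ) (r : ℝ) (h : 1 + (m:ℝ) < r) : 2 * (2:ℝ) ^ m < Real.exp r := by
  have h2 : (2:ℝ) ≤ Real.exp 1 := by
    have := Real.add_one_le_exp (1:ℝ); linarith
  calc 2 * (2:ℝ) ^ m = 2 ^ (1 + m) := by rw [pow_add, pow_one]
    _ ≤ (Real.exp 1) ^ (1 + m) := pow_le_pow_left₀ (by norm_num) h2 _
    _ = Real.exp ((1 + m : ℕ) : ℝ) := by rw [← Real.exp_nat_mul, mul_one]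
    _ < _ := by
      apply Real.exp_lt_exp.2
      rw [Nat.cast_add, Nat.cast_one]
      exact h

set_option maxHeartbeats 2000000 in
theorem stmt5 (k : ℕ) (hk : 2 ≤ k) (d δ : ℝ) (hd : 0 < d) (hδ : 0 < δ) :
    ∃ ε'₀ : ℝ, 0 < ε'₀ ∧ ∀ ε' : ℝ, 0 < ε' → ε' ≤ ε'₀ →
    ∃ (ε : ℝ) (n₀ : ℕ), 0 < ε ∧
    ∀ n : ℕ, n₀ ≤ n →
    ∀ (V : Type) [Fintype V] (P : Fin k → Finset V) (E : Set (Fin k → V)),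
      (∀ i j, i ≠ j → Disjoint (P i) (P j)) →
      (∀ i, δ * (n : ℝ) ≤ ((P i).card : ℝ) ∧ ((P i).card : ℝ) ≤ (n : ℝ) / δ) →
      (∀ e ∈ E, ∀ i, e i ∈ P i) →
      KHalfSuper ε d E P →
      ∃ E' : Set (Fin k → V), E' ⊆ E ∧ KSuper ε' (d ^ 2 / 2) E' P := by
  refine ⟨1, one_pos, fun ε' hε'0 hε'1 => ?_⟩
  obtain ⟨γ, hγ0, hγ1, hγ2⟩ : ∃ γ : ℝ, 0 < γ ∧ γ ≤ ε' ^ (k + 1) / 4 ∧ γ ≤ d ^ 2 / 4 :=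
    ⟨min (ε' ^ (k + 1) / 4) (d ^ 2 / 4), by positivity, min_le_left _ _, min_le_right _ _⟩
  set β : ℝ := d ^ 2 / 4 with hβ
  have hβ0 : 0 < β := by positivity
  obtain ⟨η, hη0, hη1, hη2⟩ : ∃ η : ℝ, 0 < η ∧ η ≤ 1 ∧ 4 * η + k * (4 * η / β) ≤ γ := by
    have hpos : 0 < 4 * (1 + k / β) := by positivity
    refine ⟨min 1 (γ / (4 * (1 + k / β))), by positivity, min_le_left _ _, ?_⟩
    have h1 : min 1 (γ / (4 * (1 + k / β))) ≤ γ / (4 * (1 + k / β)) := min_le_right _ _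
    rw [le_div_iff₀ hpos] at h1
    refine le_trans (le_of_eq ?_) h1
    ring
  obtain ⟨T, hT⟩ : ∃ T : ℕ, 1 < T * η ^ 2 := by
    obtain ⟨T, hT⟩ := exists_nat_gt (1 / η ^ 2)
    exact ⟨T, by rwa [div_lt_iff₀ (by positivity)] at hT⟩
  obtain ⟨ε, hε0, hε1, hε2⟩ : ∃ ε : ℝ, 0 < ε ∧ ε ≤ 1 ∧ ((2:ℝ) ^ T) ^ k * ε ≤ η := by
    refine ⟨min 1 (η / ((2:ℝ) ^ T) ^ k), by positivity, min_le_left _ _, ?_⟩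
    have h1 : min 1 (η / ((2:ℝ) ^ T) ^ k) ≤ η / ((2:ℝ) ^ T) ^ k := min_le_right _ _
    rw [le_div_iff₀ (by positivity)] at h1
    linarith
  obtain ⟨n₁, hn₁⟩ := exists_nat_gt (1 / δ)
  obtain ⟨n₂, hn₂⟩ := exists_nat_gt ((1 + k / δ) / (η ^ 2 / 4 * δ ^ 2))
  refine ⟨ε, n₁ + n₂ + 1, hε0, ?_⟩
  intro n hn V _ P E _ hP hE hhalf
  obtain ⟨hreg, hdeg⟩ := hhalf
  have hnr : ((n₁ + n₂ + 1 : ℕ) : ℝ) ≤ n := by exact_mod_cast hn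
  push_cast at hnr
  have hn1' : (0:ℝ) ≤ n₁ := Nat.cast_nonneg _
  have hn2' : (0:ℝ) ≤ n₂ := Nat.cast_nonneg _
  have hδn : 1 ≤ δ * n := by
    rw [div_lt_iff₀ hδ] at hn₁
    nlinarith
  set N : ℝ := ∏ i, ((P i).card : ℝ) with hN
  have hNcard : ((Fintype.piFinset P).card : ℝ) = N := by
    rw [Fintype.card_piFinset]; push_cast; rfl
  have hNlow : (δ * n) ^ 2 ≤ N := by
    calc (δ * n) ^ 2 ≤ (δ * n) ^ k := pow_le_pow_right₀ hδn hk
      _ = ∏ i : Fin k, (δ * n) := by simp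
      _ ≤ N := prod_le_prod (fun _ _ => by linarith) (fun i _ => (hP i).1)
  have hN0 : 0 < N := by nlinarith
  -- the density is at most one
  have hd1 : d ≤ 1 := by
    have h1 := hreg P (fun i => Subset.refl _) (fun i => by
      nlinarith [(Nat.cast_nonneg (P i).card : (0:ℝ) ≤ _)])
    refine h1.trans (div_le_one_of_le₀ ?_ hN0.le)
    rw [← hN, ← hNcard]
    exact_mod_cast card_filter_le _ _
  have hdd : d ^ 2 ≤ d := by nlinarith
  obtain ⟨w, hw, hwE, hwU⟩ := aux_weights P E d (3 * d ^ 2 / 4) ε η T hη0 hT (by positivity)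
    (by linarith) (by linarith) hε0 hε2
    (by have : (0:ℝ) < ((Fintype.piFinset P).card : ℝ) := by rw [hNcard]; exact hN0
        exact_mod_cast this) hreg
  have hbig : 2 * (2:ℝ) ^ (∑ i, (P i).card) <
      Real.exp (η ^ 2 / 4 * ((Fintype.piFinset P).card : ℝ)) := by
    have hsum : ((∑ i, (P i).card : ℕ) : ℝ) ≤ k * (n / δ) := by
      push_cast
      refine (sum_le_sum fun i _ => (hP i).2).trans ?_
      simp
    have h3 : 1 + k * (n / δ) < η ^ 2 / 4 * N := by
      have hq : 0 < η ^ 2 / 4 * δ ^ 2 := by positivity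
      rw [div_lt_iff₀ hq] at hn₂
      have hn0 : (1:ℝ) ≤ n := by linarith
      have e1 : (1 + k / δ) < n * (η ^ 2 / 4 * δ ^ 2) := by nlinarith
      have e2 : η ^ 2 / 4 * (δ * n) ^ 2 ≤ η ^ 2 / 4 * N :=
        mul_le_mul_of_nonneg_left hNlow (by positivity)
      have e3 : (1 + k / δ) * n < n * (η ^ 2 / 4 * δ ^ 2) * n :=
        mul_lt_mul_of_pos_right e1 (by linarith)
      have e4 : (k:ℝ) * (n / δ) = k / δ * n := by ring
      rw [e4]
      nlinarith
    apply aux_two_pow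
    rw [hNcard]
    linarith
  obtain ⟨E₁, hE₁, hE₁U⟩ := aux_sparse P E w hw hwE η hη0 hη1 hbig
  have hE₁c : ∀ U : Fin k → Finset V, (∀ i, U i ⊆ P i) →
      |(kCount E₁ U : ℝ) - (3 * d ^ 2 / 4) * ∏ i, ((U i).card : ℝ)| ≤
        4 * η * ∏ i, ((P i).card : ℝ) := by
    intro U hU
    rw [← aux_count P U hU]
    have e : ∑ x ∈ Fintype.piFinset P, (if ∀ i, x i ∈ U i then (1:ℝ) else 0) *
        ((if x ∈ E₁ then 1 else 0) - 3 * d ^ 2 / 4) =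
        ∑ x ∈ Fintype.piFinset P, (if ∀ i, x i ∈ U i then (1:ℝ) else 0) *
          ((if x ∈ E₁ then 1 else 0) - w x) +
        ∑ x ∈ Fintype.piFinset P, (if ∀ i, x i ∈ U i then (1:ℝ) else 0) *
          (w x - 3 * d ^ 2 / 4) := by
      rw [← sum_add_distrib]; apply sum_congr rfl; intros; ring
    rw [e]
    refine (abs_add_le _ _).trans ?_
    have a1 := hE₁U U hU
    have a2 := hwU U
    rw [hNcard] at a1 a2
    rw [← hN]
    linarith
  obtain ⟨E', hE', hdeg', hcnt⟩ := aux_fix P E E₁ hE hE₁ (3 * d ^ 2 / 4) d β (4 * η) hβ0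
    (by rw [hβ]; linarith) hdeg hE₁c
  have hcb : 3 * d ^ 2 / 4 - β = d ^ 2 / 2 := by rw [hβ]; ring
  rw [hcb] at hdeg'
  have hcnt' : ∀ U : Fin k → Finset V, (∀ i, U i ⊆ P i) →
      |(kCount E' U : ℝ) - (3 * d ^ 2 / 4) * ∏ i, ((U i).card : ℝ)| ≤ γ * N :=
    fun U hU => (hcnt U hU).trans (mul_le_mul_of_nonneg_right hη2 hN0.le)
  have hdens : ∀ U : Fin k → Finset V, (∀ i, U i ⊆ P i) →
      ∀ q : ℝ, 0 < q → q * N ≤ ∏ i, ((U i).card : ℝ) →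
      |kDensity E' U - 3 * d ^ 2 / 4| ≤ γ / q := by
    intro U hU q hq hqU
    have hpos : 0 < ∏ i, ((U i).card : ℝ) := lt_of_lt_of_le (mul_pos hq hN0) hqU
    have e : kDensity E' U - 3 * d ^ 2 / 4 =
        ((kCount E' U : ℝ) - (3 * d ^ 2 / 4) * ∏ i, ((U i).card : ℝ)) / ∏ i, ((U i).card : ℝ) := by
      rw [kDensity, sub_div, mul_div_cancel_right₀ _ hpos.ne']
    rw [e, abs_div, abs_of_pos hpos, div_le_div_iff₀ hpos hq]
    have h1 := mul_le_mul_of_nonneg_right (hcnt' U hU) hq.le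
    have h2 := mul_le_mul_of_nonneg_left hqU hγ0.le
    linarith
  have hdP : |kDensity E' P - 3 * d ^ 2 / 4| ≤ γ := by
    have := hdens P (fun i => Subset.refl _) 1 one_pos (by rw [one_mul])
    rwa [div_one] at this
  refine ⟨E', hE', ⟨?_, ?_⟩, hdeg'⟩
  · have := (abs_le.1 hdP).1
    linarith
  · intro U hU hUc
    have hq : ε' ^ k * N ≤ ∏ i, ((U i).card : ℝ) := by
      calc ε' ^ k * N = ∏ i, (ε' * ((P i).card : ℝ)) := by
            rw [prod_mul_distrib]; simp [hN]
        _ ≤ _ := prod_le_prod (fun i _ => by positivity) (fun i _ => hUc i)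
    have h1 := hdens U hU (ε' ^ k) (by positivity) hq
    have h2 : γ / ε' ^ k ≤ ε' / 4 := by
      rw [div_le_iff₀ (by positivity)]
      refine hγ1.trans (le_of_eq ?_)
      rw [pow_succ]; ring
    have h3 : γ ≤ ε' / 4 := by
      refine le_trans ?_ h2
      rw [le_div_iff₀ (by positivity)]
      exact mul_le_of_le_one_right hγ0.le (pow_le_one₀ hε'0.le hε'1)
    have a1 := abs_le.1 h1
    have a2 := abs_le.1 hdP
    rw [abs_lt]
    constructor <;> linarith [a1.1, a1.2, a2.1, a2.2]
end

section
/- For every integer r ≥ 2 and all reals d, δ > 0 there exists ε'₀ > 0 such that for every ε' ∈ (0, ε'₀] there exist ε > 0 and m₀ ∈ ℕ with the following property for all integers m ≥ m₀. Let R be a graph on vertex set [r] and let 𝓕 = (𝒱, 𝒞, 𝐆) be a half-super R-template with parameters (m, ε, d, δ). Then for every c ∈ 𝒞 there is a spanning subgraph G'_c ⊆ G_c such that, setting 𝐆' = (G'_c : c ∈ 𝒞), the triple (𝒱, 𝒞, 𝐆') is a super R-template with parameters (m, ε', d²/2, δ). -/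
open Finset
open scoped Classical

lemma round_step (w : ℝ) (h0 : 0 ≤ w) (h1 : w ≤ 1) (f : ℝ) (hf : |f| ≤ 1) :
    w * Real.exp (f * (1 - w)) + (1 - w) * Real.exp (f * (0 - w)) ≤ Real.exp (f ^ 2) := by
  have key : ∀ x : ℝ, |x| ≤ 1 → Real.exp x ≤ 1 + x + x ^ 2 := by
    intro x hx
    have := abs_le.1 (Real.abs_exp_sub_one_sub_id_le hx)
    linarith [this.2]
  have hfa := abs_le.1 hf
  have e1 := key (f * (1 - w)) (by
    rw [abs_mul]; have : |1 - w| ≤ 1 := abs_le.2 ⟨by linarith, by linarith⟩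
    nlinarith [abs_nonneg f, abs_nonneg (1 - w)])
  have e2 := key (f * (0 - w)) (by
    rw [abs_mul]; have : |0 - w| ≤ 1 := abs_le.2 ⟨by linarith, by linarith⟩
    nlinarith [abs_nonneg f, abs_nonneg (0 - w)])
  have e3 := Real.add_one_le_exp (f ^ 2)
  have h2 : 0 ≤ 1 - w := by linarith
  have e1' := mul_le_mul_of_nonneg_left e1 h0
  have e2' := mul_le_mul_of_nonneg_left e2 h2
  have : w * (1 - w) ≤ 1 := by nlinarith
  have : f ^ 2 * (w * (1 - w)) ≤ f ^ 2 := by nlinarith [sq_nonneg f]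
  nlinarith

lemma round_aux {I J : Type*} [Fintype J] (w : I → ℝ) (h0 : ∀ i, 0 ≤ w i) (h1 : ∀ i, w i ≤ 1)
    (f : J → I → ℝ) (hf : ∀ j i, |f j i| ≤ 1) (s : Finset I) :
    ∀ q : J → ℝ, (∀ j, 0 ≤ q j) →
    ∃ h : I → ℝ, (∀ i, h i = 0 ∨ (h i = 1 ∧ w i ≠ 0)) ∧
      ∑ j, q j * Real.exp (∑ i ∈ s, f j i * (h i - w i)) ≤
        ∑ j, q j * Real.exp (∑ i ∈ s, (f j i) ^ 2) := by
  induction s using Finset.induction_on with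
  | empty => intro q hq; exact ⟨fun _ => 0, fun _ => Or.inl rfl, by simp⟩
  | insert i s hi ih =>
    intro q hq
    obtain ⟨v, hv, hle⟩ : ∃ v : ℝ, (v = 0 ∨ (v = 1 ∧ w i ≠ 0)) ∧
        ∑ j, (q j * Real.exp (f j i * (v - w i))) * Real.exp (∑ i ∈ s, (f j i) ^ 2) ≤
        ∑ j, q j * Real.exp (∑ i ∈ insert i s, (f j i) ^ 2) := by
      by_contra hcon
      push Not at hcon
      have hz := hcon 0 (Or.inl rfl)
      have tot : w i * (∑ j, (q j * Real.exp (f j i * (1 - w i))) * Real.exp (∑ i ∈ s, (f j i) ^ 2))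
          + (1 - w i) * (∑ j, (q j * Real.exp (f j i * (0 - w i))) * Real.exp (∑ i ∈ s, (f j i) ^ 2))
          ≤ ∑ j, q j * Real.exp (∑ i ∈ insert i s, (f j i) ^ 2) := by
        rw [Finset.mul_sum, Finset.mul_sum, ← Finset.sum_add_distrib]
        apply Finset.sum_le_sum
        intro j _
        rw [Finset.sum_insert hi, Real.exp_add]
        have := round_step (w i) (h0 i) (h1 i) (f j i) (hf j i)
        have := mul_le_mul_of_nonneg_left this
          (mul_nonneg (hq j) (Real.exp_nonneg (∑ i ∈ s, (f j i) ^ 2)))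
        nlinarith
      by_cases hw : w i = 0
      · rw [hw] at tot hz; linarith
      · have ho := hcon 1 (Or.inr ⟨rfl, hw⟩)
        have hpos : 0 < w i := lt_of_le_of_ne (h0 i) (Ne.symm hw)
        have := h1 i
        nlinarith
    obtain ⟨h, hh, hle2⟩ := ih (fun j => q j * Real.exp (f j i * (v - w i)))
      (fun j => mul_nonneg (hq j) (Real.exp_nonneg _))
    refine ⟨Function.update h i v, ?_, ?_⟩
    · intro k
      by_cases hk : k = i
      · subst hk; simpa using hv
      · simpa [Function.update_of_ne hk] using hh k
    · refine le_trans (le_of_eq ?_) (hle2.trans hle)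
      apply Finset.sum_congr rfl
      intro j _
      rw [Finset.sum_insert hi, Real.exp_add, Function.update_self]
      have : ∑ k ∈ s, f j k * (Function.update h i v k - w k) = ∑ k ∈ s, f j k * (h k - w k) := by
        apply Finset.sum_congr rfl
        intro k hk
        rw [Function.update_of_ne (by rintro rfl; exact hi hk)]
      rw [this]; ring

lemma round_main {I J : Type*} [Fintype J] (w : I → ℝ) (h0 : ∀ i, 0 ≤ w i) (h1 : ∀ i, w i ≤ 1)
    (f : J → I → ℝ) (hf : ∀ j i, |f j i| ≤ 1) (s : Finset I) (τ : J → ℝ)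
    (hτ : ∑ j, Real.exp (∑ i ∈ s, (f j i) ^ 2 - τ j) < 1) :
    ∃ h : I → ℝ, (∀ i, h i = 0 ∨ (h i = 1 ∧ w i ≠ 0)) ∧
      ∀ j, ∑ i ∈ s, f j i * (h i - w i) ≤ τ j := by
  obtain ⟨h, hh, hle⟩ := round_aux w h0 h1 f hf s (fun j => Real.exp (- τ j))
    (fun j => Real.exp_nonneg _)
  refine ⟨h, hh, fun j => ?_⟩
  have e : ∑ j, Real.exp (- τ j) * Real.exp (∑ i ∈ s, (f j i) ^ 2) < 1 := by
    refine lt_of_le_of_lt (le_of_eq ?_) hτ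
    apply Finset.sum_congr rfl
    intro j _
    rw [← Real.exp_add]; congr 1; ring
  have := Finset.single_le_sum (f := fun j => Real.exp (- τ j) *
    Real.exp (∑ i ∈ s, f j i * (h i - w i))) (fun j _ => by positivity) (Finset.mem_univ j)
  have h2 : Real.exp (- τ j + ∑ i ∈ s, f j i * (h i - w i)) < 1 := by
    rw [Real.exp_add]; linarith
  rw [Real.exp_lt_one_iff] at h2
  linarith

/-- Rounding a weighted bipartite graph. -/
lemma round_bip {V : Type*} (X Y : Finset V) (w : V × V → ℝ) (h0 : ∀ i, 0 ≤ w i)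
    (h1 : ∀ i, w i ≤ 1) (η : ℝ) (hη : 0 < η) (hη1 : η ≤ 1)
    (hX : 12 ≤ η ^ 2 / 4 * X.card) (hY : 12 ≤ η ^ 2 / 4 * Y.card)
    (hXY : 3 * (X.card : ℝ) < Real.exp (η ^ 2 / 4 * Y.card))
    (hYX : 3 * (Y.card : ℝ) < Real.exp (η ^ 2 / 4 * X.card)) :
    ∃ h : V × V → ℝ, (∀ i, h i = 0 ∨ (h i = 1 ∧ w i ≠ 0)) ∧
      (∀ A ⊆ X, ∀ B ⊆ Y, |∑ i ∈ A ×ˢ B, (h i - w i)| ≤ η * (X.card * Y.card)) ∧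
      (∀ x ∈ X, ∑ y ∈ Y, w (x, y) - η * Y.card ≤ ∑ y ∈ Y, h (x, y)) ∧
      (∀ y ∈ Y, ∑ x ∈ X, w (x, y) - η * X.card ≤ ∑ x ∈ X, h (x, y)) := by
  set n1 : ℝ := (X.card : ℝ) with hn1
  set n2 : ℝ := (Y.card : ℝ) with hn2
  -- tests
  let Bx : (Bool × ↥X.powerset × ↥Y.powerset) ⊕ (↥X ⊕ ↥Y) → Finset (V × V) := fun j =>
    match j with
    | Sum.inl (_, A, B) => A.1 ×ˢ B.1
    | Sum.inr (Sum.inl x) => {x.1} ×ˢ Y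
    | Sum.inr (Sum.inr y) => X ×ˢ {y.1}
  let sg : (Bool × ↥X.powerset × ↥Y.powerset) ⊕ (↥X ⊕ ↥Y) → ℝ := fun j =>
    match j with
    | Sum.inl (b, _, _) => if b then 1 else -1
    | Sum.inr _ => -1
  let sz : (Bool × ↥X.powerset × ↥Y.powerset) ⊕ (↥X ⊕ ↥Y) → ℝ := fun j =>
    match j with
    | Sum.inl _ => n1 * n2
    | Sum.inr (Sum.inl _) => n2
    | Sum.inr (Sum.inr _) => n1
  have hsub : ∀ j, Bx j ⊆ X ×ˢ Y := by
    rintro (⟨b, A, B⟩ | x | y)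
    · exact Finset.product_subset_product (Finset.mem_powerset.1 A.2) (Finset.mem_powerset.1 B.2)
    · exact Finset.product_subset_product (by simp) (by simp)
    · exact Finset.product_subset_product (by simp) (by simp)
  have hsz : ∀ j, ((Bx j).card : ℝ) ≤ sz j := by
    rintro (⟨b, A, B⟩ | x | y)
    · have := Finset.card_le_card (hsub (Sum.inl (b, A, B)))
      rw [Finset.card_product X Y] at this
      simp only [sz, n1, n2]; exact_mod_cast this
    · simp [Bx, sz, n2]
    · simp [Bx, sz, n1]
  have hsg : ∀ j, sg j ^ 2 = 1 := by
    rintro (⟨b, A, B⟩ | x | y)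
    · cases b <;> simp [sg]
    · simp [sg]
    · simp [sg]
  let f : (Bool × ↥X.powerset × ↥Y.powerset) ⊕ (↥X ⊕ ↥Y) → V × V → ℝ := fun j i =>
    if i ∈ Bx j then sg j * (η / 2) else 0
  have hf : ∀ j i, |f j i| ≤ 1 := by
    intro j i
    apply abs_le_one_iff_mul_self_le_one.2
    simp only [f]
    split_ifs
    · have := hsg j
      nlinarith
    · norm_num
  have hsum : ∀ j (g : V × V → ℝ), ∑ i ∈ X ×ˢ Y, f j i * g i
      = sg j * (η / 2) * ∑ i ∈ Bx j, g i := by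
    intro j g
    rw [Finset.mul_sum, ← Finset.sum_subset (hsub j)]
    · apply Finset.sum_congr rfl
      intro i hi; simp [f, hi]
    · intro i _ hi; simp [f, hi]
  have hexp : ∀ j, Real.exp (∑ i ∈ X ×ˢ Y, (f j i) ^ 2 - η ^ 2 / 2 * sz j) ≤
      Real.exp (- (η ^ 2 / 4 * sz j)) := by
    intro j
    apply Real.exp_le_exp.2
    have e : ∑ i ∈ X ×ˢ Y, (f j i) ^ 2 = η ^ 2 / 4 * (Bx j).card := by
      simp_rw [sq (f j _)]
      rw [hsum j (f j)]
      have : ∑ i ∈ Bx j, f j i = (Bx j).card * (sg j * (η / 2)) := by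
        rw [Finset.sum_congr rfl (g := fun _ => sg j * (η / 2))]
        · simp
        · intro i hi; simp [f, hi]
      rw [this]
      linear_combination (η ^ 2 / 4 * (Bx j).card) * hsg j
    rw [e]
    have := hsz j
    nlinarith [sq_nonneg η]
  have h12 : 0 < n1 ∧ 0 < n2 := by
    constructor
    · by_contra hc
      nlinarith [sq_nonneg η]
    · by_contra hc
      nlinarith [sq_nonneg η]
  have hone : ∀ N : ℝ, 12 ≤ η ^ 2 / 4 * N → 1 ≤ N := by
    intro N hN
    by_contra hc
    nlinarith [sq_nonneg η]
  have hn1' := hone _ hX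
  have hn2' := hone _ hY
  obtain ⟨h, hh, hle⟩ := round_main w h0 h1 f hf (X ×ˢ Y) (fun j => η ^ 2 / 2 * sz j) (by
    refine lt_of_le_of_lt (Finset.sum_le_sum fun j _ => hexp j) ?_
    rw [Fintype.sum_sum_type, Fintype.sum_sum_type]
    have p1 : ∑ x : (Bool × ↥X.powerset × ↥Y.powerset),
        Real.exp (- (η ^ 2 / 4 * sz (Sum.inl x))) < 1 / 3 := by
      simp only [sz, Finset.sum_const, Finset.card_univ, Fintype.card_prod, Fintype.card_coe,
        Finset.card_powerset, Fintype.card_bool, nsmul_eq_mul]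
      push_cast
      have h2 : ∀ n : ℕ, (2 : ℝ) ^ n ≤ Real.exp n := by
        intro n
        rw [← mul_one (n : ℝ), Real.exp_nat_mul]
        apply pow_le_pow_left₀ (by norm_num)
        have := Real.add_one_le_exp (1 : ℝ); linarith
      have a1 := h2 X.card
      have a2 := h2 Y.card
      calc (2 : ℝ) * (2 ^ X.card * 2 ^ Y.card) * Real.exp (-(η ^ 2 / 4 * (n1 * n2)))
          ≤ Real.exp 1 * (Real.exp n1 * Real.exp n2) * Real.exp (-(η ^ 2 / 4 * (n1 * n2))) := by
            have := Real.add_one_le_exp (1 : ℝ)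
            gcongr
            linarith
        _ = Real.exp (1 + (n1 + n2) + -(η ^ 2 / 4 * (n1 * n2))) := by
            simp only [Real.exp_add]
        _ ≤ Real.exp (-3) := by
            apply Real.exp_le_exp.2
            nlinarith
        _ < 1 / 3 := by
            rw [Real.exp_neg, inv_eq_one_div]
            apply one_div_lt_one_div_of_lt (by norm_num)
            have := Real.add_one_le_exp (3 : ℝ); linarith
    have p2 : ∑ x : ↥X, Real.exp (- (η ^ 2 / 4 * sz (Sum.inr (Sum.inl x)))) < 1 / 3 := by
      simp only [sz, Finset.sum_const, Finset.card_univ, Fintype.card_coe, nsmul_eq_mul]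
      rw [Real.exp_neg, ← div_eq_mul_inv, div_lt_iff₀ (Real.exp_pos _)]
      linarith
    have p3 : ∑ x : ↥Y, Real.exp (- (η ^ 2 / 4 * sz (Sum.inr (Sum.inr x)))) < 1 / 3 := by
      simp only [sz, Finset.sum_const, Finset.card_univ, Fintype.card_coe, nsmul_eq_mul]
      rw [Real.exp_neg, ← div_eq_mul_inv, div_lt_iff₀ (Real.exp_pos _)]
      linarith
    linarith)
  have hfin : ∀ j, sg j * ∑ i ∈ Bx j, (h i - w i) ≤ η * sz j := by
    intro j
    have := hle j
    rw [hsum j (fun i => h i - w i)] at this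
    have h3 : (η / 2) * (sg j * ∑ i ∈ Bx j, (h i - w i)) ≤ (η / 2) * (η * sz j) := by
      nlinarith
    exact le_of_mul_le_mul_left h3 (by linarith)
  refine ⟨h, hh, ?_, ?_, ?_⟩
  · intro A hA B hB
    have t1 := hfin (Sum.inl (true, ⟨A, Finset.mem_powerset.2 hA⟩, ⟨B, Finset.mem_powerset.2 hB⟩))
    have t2 := hfin (Sum.inl (false, ⟨A, Finset.mem_powerset.2 hA⟩, ⟨B, Finset.mem_powerset.2 hB⟩))
    simp only [sg, Bx, sz] at t1 t2
    simp at t1 t2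
    rw [abs_le]
    simp only [Finset.sum_sub_distrib]
    constructor <;> linarith
  · intro x hx
    have t1 := hfin (Sum.inr (Sum.inl ⟨x, hx⟩))
    simp only [sg, Bx, sz, Finset.sum_product, Finset.sum_singleton,
      Finset.sum_sub_distrib] at t1
    linarith
  · intro y hy
    have t1 := hfin (Sum.inr (Sum.inr ⟨y, hy⟩))
    simp only [sg, Bx, sz, Finset.sum_product, Finset.sum_singleton,
      Finset.sum_sub_distrib] at t1
    linarith

noncomputable def fmean {P L : Type*} [DecidableEq L] (Ω : Finset P) (lab : P → L) (e : P → ℝ) (z : L) : ℝ :=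
  (∑ ω ∈ Ω.filter (fun ω => lab ω = z), e ω) / ((Ω.filter (fun ω => lab ω = z)).card : ℝ)

lemma fmean_sum {P L : Type*} [DecidableEq L] (Ω : Finset P) (lab : P → L) (e : P → ℝ) (g : L → ℝ) :
    ∑ ω ∈ Ω, g (lab ω) * e ω = ∑ ω ∈ Ω, g (lab ω) * fmean Ω lab e (lab ω) := by
  have hm : ∀ ω ∈ Ω, lab ω ∈ Ω.image lab := fun ω h => Finset.mem_image_of_mem _ h
  rw [← Finset.sum_fiberwise_of_maps_to hm, ← Finset.sum_fiberwise_of_maps_to hm]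
  apply Finset.sum_congr rfl
  intro z hz
  have e1 : ∑ ω ∈ Ω.filter (fun ω => lab ω = z), g (lab ω) * e ω
      = g z * ∑ ω ∈ Ω.filter (fun ω => lab ω = z), e ω := by
    rw [Finset.mul_sum]
    apply Finset.sum_congr rfl
    intro ω hω
    rw [(Finset.mem_filter.1 hω).2]
  have e2 : ∑ ω ∈ Ω.filter (fun ω => lab ω = z), g (lab ω) * fmean Ω lab e (lab ω)
      = ((Ω.filter (fun ω => lab ω = z)).card : ℝ) * (g z * fmean Ω lab e z) := by
    rw [← nsmul_eq_mul, ← Finset.sum_const]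
    apply Finset.sum_congr rfl
    intro ω hω
    rw [(Finset.mem_filter.1 hω).2]
  rw [e1, e2]
  obtain ⟨ω, hω, rfl⟩ := Finset.mem_image.1 hz
  have hpos : (((Ω.filter (fun ω' => lab ω' = lab ω)).card : ℕ) : ℝ) ≠ 0 := by
    have : 0 < (Ω.filter (fun ω' => lab ω' = lab ω)).card :=
      Finset.card_pos.2 ⟨ω, Finset.mem_filter.2 ⟨hω, rfl⟩⟩
    positivity
  unfold fmean
  field_simp

lemma fmean_best {P L : Type*} [DecidableEq L] (Ω : Finset P) (lab : P → L) (e : P → ℝ) (h : L → ℝ) :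
    ∑ ω ∈ Ω, (e ω - fmean Ω lab e (lab ω)) ^ 2 ≤ ∑ ω ∈ Ω, (e ω - h (lab ω)) ^ 2 := by
  have k := fmean_sum Ω lab e (fun z => fmean Ω lab e z - h z)
  have : ∑ ω ∈ Ω, (e ω - h (lab ω)) ^ 2 - ∑ ω ∈ Ω, (e ω - fmean Ω lab e (lab ω)) ^ 2
      = ∑ ω ∈ Ω, (fmean Ω lab e (lab ω) - h (lab ω)) ^ 2 +
        2 * (∑ ω ∈ Ω, (fmean Ω lab e (lab ω) - h (lab ω)) * e ω -
          ∑ ω ∈ Ω, (fmean Ω lab e (lab ω) - h (lab ω)) * fmean Ω lab e (lab ω)) := by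
    rw [← Finset.sum_sub_distrib, ← Finset.sum_sub_distrib, Finset.mul_sum,
      ← Finset.sum_add_distrib]
    apply Finset.sum_congr rfl
    intro ω _
    ring
  rw [k, sub_self, mul_zero, add_zero] at this
  have : 0 ≤ ∑ ω ∈ Ω, (fmean Ω lab e (lab ω) - h (lab ω)) ^ 2 :=
    Finset.sum_nonneg fun _ _ => sq_nonneg _
  linarith

lemma fmean_step {P L L' : Type*} [DecidableEq L] [DecidableEq L'] (Ω : Finset P) (lab : P → L) (lab' : P → L') (e : P → ℝ)
    (π : L' → L) (hπ : ∀ ω, lab ω = π (lab' ω)) (γ : L' → ℝ) (hγ : ∀ z, |γ z| ≤ 1)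
    (α : ℝ) (hα : 0 < α) (hN : 0 < Ω.card)
    (hv : α * Ω.card < |∑ ω ∈ Ω, (e ω - fmean Ω lab e (lab ω)) * γ (lab' ω)|) :
    ∑ ω ∈ Ω, (e ω - fmean Ω lab' e (lab' ω)) ^ 2 ≤
      ∑ ω ∈ Ω, (e ω - fmean Ω lab e (lab ω)) ^ 2 - α ^ 2 * Ω.card := by
  have hN' : (0 : ℝ) < Ω.card := by exact_mod_cast hN
  set q := ∑ ω ∈ Ω, (e ω - fmean Ω lab e (lab ω)) * γ (lab' ω) with hq
  set N : ℝ := (Ω.card : ℝ) with hNdef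
  set s := q / N with hs
  have hqs : q = s * N := by rw [hs]; field_simp
  refine (fmean_best Ω lab' e (fun z => fmean Ω lab e (π z) + s * γ z)).trans ?_
  have e1 : ∑ ω ∈ Ω, (e ω - (fmean Ω lab e (π (lab' ω)) + s * γ (lab' ω))) ^ 2
      = ∑ ω ∈ Ω, (e ω - fmean Ω lab e (lab ω)) ^ 2 - 2 * s * q
        + s ^ 2 * ∑ ω ∈ Ω, (γ (lab' ω)) ^ 2 := by
    rw [hq, Finset.mul_sum, Finset.mul_sum, ← Finset.sum_sub_distrib, ← Finset.sum_add_distrib]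
    apply Finset.sum_congr rfl
    intro ω _
    rw [hπ ω]; ring
  rw [e1]
  have e2 : ∑ ω ∈ Ω, (γ (lab' ω)) ^ 2 ≤ N := by
    calc ∑ ω ∈ Ω, (γ (lab' ω)) ^ 2 ≤ ∑ ω ∈ Ω, (1 : ℝ) := by
          apply Finset.sum_le_sum
          intro ω _
          exact (sq_le_one_iff_abs_le_one _).2 (hγ _)
      _ = N := by simp [hNdef]
  have e3 : α ^ 2 ≤ s ^ 2 := by
    have : α ≤ |s| := by
      rw [hs, abs_div, abs_of_pos hN', le_div_iff₀ hN']
      exact hv.le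
    rw [← sq_abs s]
    exact pow_le_pow_left₀ hα.le this 2
  have e4 : s ^ 2 * ∑ ω ∈ Ω, (γ (lab' ω)) ^ 2 ≤ s ^ 2 * N :=
    mul_le_mul_of_nonneg_left e2 (sq_nonneg s)
  have e5 : α ^ 2 * N ≤ s ^ 2 * N := mul_le_mul_of_nonneg_right e3 hN'.le
  rw [hqs]
  nlinarith

def trip {V C : Type*} (a b : V → ℕ) (l : C → ℕ) : V × V × C → ℕ × ℕ × ℕ :=
  fun ω => (a ω.1, b ω.2.1, l ω.2.2)

lemma energy {V C : Type*} (Ω : Finset (V × V × C)) (hN : 0 < Ω.card)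
    (e : V × V × C → ℝ) (he0 : ∀ ω, 0 ≤ e ω) (he1 : ∀ ω, e ω ≤ 1)
    (t : ℝ → ℝ) (ht0 : ∀ u, 0 ≤ t u) (ht1 : ∀ u, t u ≤ 1) (α : ℝ) (hα : 0 < α) (K : ℕ)
    (hK : 1 < K * α ^ 2) :
    ∃ (a b : V → ℕ) (l : C → ℕ), (∀ x, a x < 2 ^ K) ∧ (∀ x, b x < 2 ^ K) ∧ (∀ x, l x < 2 ^ K) ∧
      ∀ (A B : Finset V) (S : Finset C),
        |∑ ω ∈ Ω, (e ω - fmean Ω (trip a b l) e (trip a b l ω)) *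
          (t (fmean Ω (trip a b l) e (trip a b l ω)) * if ω ∈ A ×ˢ B ×ˢ S then 1 else 0)|
          ≤ α * Ω.card := by
  by_contra hcon
  push Not at hcon
  have main : ∀ k : ℕ, k ≤ K → ∃ (a b : V → ℕ) (l : C → ℕ), (∀ x, a x < 2 ^ k) ∧
      (∀ x, b x < 2 ^ k) ∧ (∀ x, l x < 2 ^ k) ∧
      ∑ ω ∈ Ω, (e ω - fmean Ω (trip a b l) e (trip a b l ω)) ^ 2 ≤
        Ω.card - k * α ^ 2 * Ω.card := by
    intro k
    induction k with
    | zero =>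
      intro _
      refine ⟨fun _ => 0, fun _ => 0, fun _ => 0, by simp, by simp, by simp, ?_⟩
      refine (fmean_best _ _ _ (fun _ => 0)).trans ?_
      calc ∑ ω ∈ Ω, (e ω - 0) ^ 2 ≤ ∑ ω ∈ Ω, (1 : ℝ) := by
            apply Finset.sum_le_sum
            intro ω _
            have := he0 ω
            have := he1 ω
            nlinarith
        _ = _ := by simp
    | succ k ih =>
      intro hk
      obtain ⟨a, b, l, ha, hb, hl, hΨ⟩ := ih (by omega)
      have hmono : 2 ^ k ≤ 2 ^ K := Nat.pow_le_pow_right (by norm_num) (by omega)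
      obtain ⟨A, B, S, hv⟩ := hcon a b l (fun x => (ha x).trans_le hmono)
        (fun x => (hb x).trans_le hmono) (fun x => (hl x).trans_le hmono)
      let a' : V → ℕ := fun x => 2 * a x + if x ∈ A then 1 else 0
      let b' : V → ℕ := fun x => 2 * b x + if x ∈ B then 1 else 0
      let l' : C → ℕ := fun x => 2 * l x + if x ∈ S then 1 else 0
      have hdiv : ∀ (n : ℕ) (p : Prop) [Decidable p], (2 * n + if p then 1 else 0) / 2 = n := by
        intro n p _; split_ifs <;> omega
      have hmod : ∀ (n : ℕ) (p : Prop) [Decidable p], (2 * n + if p then 1 else 0) % 2 = 1 ↔ p := by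
        intro n p _
        by_cases hp : p <;> simp [hp]
      refine ⟨a', b', l', ?_, ?_, ?_, ?_⟩
      · intro x; have := ha x; simp only [a', pow_succ]; split_ifs <;> omega
      · intro x; have := hb x; simp only [b', pow_succ]; split_ifs <;> omega
      · intro x; have := hl x; simp only [l', pow_succ]; split_ifs <;> omega
      · let π : ℕ × ℕ × ℕ → ℕ × ℕ × ℕ := fun z => (z.1 / 2, z.2.1 / 2, z.2.2 / 2)
        let γ : ℕ × ℕ × ℕ → ℝ := fun z => t (fmean Ω (trip a b l) e (π z)) *
          if (z.1 % 2 = 1 ∧ z.2.1 % 2 = 1 ∧ z.2.2 % 2 = 1) then 1 else 0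
        have hπ : ∀ ω, trip a b l ω = π (trip a' b' l' ω) := by
          intro ω
          simp only [trip, π, a', b', l', hdiv]
        have hst := fmean_step Ω (trip a b l) (trip a' b' l') e π hπ γ (by
          intro z
          have := ht0 (fmean Ω (trip a b l) e (π z))
          have := ht1 (fmean Ω (trip a b l) e (π z))
          simp only [γ]
          split_ifs
          · rw [mul_one, abs_of_nonneg (ht0 _)]; exact ht1 _
          · simp) α hα hN (by
          refine lt_of_lt_of_eq hv ?_
          congr 1
          apply Finset.sum_congr rfl
          intro ω _
          simp only [γ, ← hπ ω]
          congr 3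
          simp only [trip, a', b', l', hmod, Finset.mem_product])
        push_cast
        linarith
  obtain ⟨a, b, l, _, _, _, h⟩ := main K le_rfl
  have h0 : 0 ≤ ∑ ω ∈ Ω, (e ω - fmean Ω (trip a b l) e (trip a b l ω)) ^ 2 :=
    Finset.sum_nonneg fun _ _ => sq_nonneg _
  have hN' : (0 : ℝ) < Ω.card := by exact_mod_cast hN
  nlinarith

lemma small_count {V : Type*} (X : Finset V) (a : V → ℕ) (M : ℕ) (ha : ∀ x, a x < M) (ε : ℝ)
    (hε : 0 ≤ ε) :
    (((X.filter (fun x => ((X.filter (fun x' => a x' = a x)).card : ℝ) < ε * X.card)).card : ℕ) : ℝ)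
      ≤ M * (ε * X.card) := by
  set Xb := X.filter (fun x => ((X.filter (fun x' => a x' = a x)).card : ℝ) < ε * X.card) with hXb
  have hneg : 0 ≤ ε * (X.card : ℝ) := by positivity
  · have h1 := Finset.card_eq_sum_card_fiberwise (f := a) (s := Xb) (t := Finset.range M)
      (fun x _ => by simpa using ha x)
    rw [h1]
    push_cast
    calc ∑ p ∈ Finset.range M, ((Xb.filter (fun x => a x = p)).card : ℝ)
        ≤ ∑ p ∈ Finset.range M, ε * (X.card : ℝ) := by
          apply Finset.sum_le_sum
          intro p _
          by_cases hne : (Xb.filter (fun x => a x = p)).Nonempty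
          · obtain ⟨x, hx⟩ := hne
            obtain ⟨hx1, rfl⟩ := Finset.mem_filter.1 hx
            have := (Finset.mem_filter.1 hx1).2
            refine le_trans ?_ this.le
            exact_mod_cast Finset.card_le_card
              (Finset.filter_subset_filter _ (Finset.filter_subset _ _))
          · rw [Finset.not_nonempty_iff_eq_empty.1 hne]; simpa using hneg
      _ = _ := by simp

lemma weights {V C : Type*} (X Y : Finset V) (Z : Finset C)
    (hN : 0 < (X ×ˢ Y ×ˢ Z).card)
    (e : V × V × C → ℝ) (he0 : ∀ ω, 0 ≤ e ω) (he1 : ∀ ω, e ω ≤ 1)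
    (α d ε : ℝ) (hα : 0 < α) (hd : 0 < d) (hd1 : d ≤ 1) (hε : 0 < ε) (K : ℕ)
    (hK : 1 < K * α ^ 2) (hεK : 3 * 2 ^ K * ε ≤ α)
    (hhalf : ∀ A ⊆ X, ∀ B ⊆ Y, ∀ S ⊆ Z, ε * (X.card : ℝ) ≤ A.card → ε * (Y.card : ℝ) ≤ B.card →
      ε * (Z.card : ℝ) ≤ S.card →
      d * ((A ×ˢ B ×ˢ S).card : ℝ) ≤ ∑ ω ∈ A ×ˢ B ×ˢ S, e ω) :
    ∃ w : V × V × C → ℝ, (∀ ω ∈ X ×ˢ Y ×ˢ Z, d * e ω ≤ w ω) ∧ (∀ ω, 0 ≤ w ω) ∧ (∀ ω, w ω ≤ e ω) ∧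
      ∀ A ⊆ X, ∀ B ⊆ Y, ∀ S ⊆ Z,
        |∑ ω ∈ A ×ˢ B ×ˢ S, w ω - d * ((A ×ˢ B ×ˢ S).card : ℝ)|
          ≤ 2 * α * ((X ×ˢ Y ×ˢ Z).card : ℝ) := by
  set Ω := X ×ˢ Y ×ˢ Z with hΩ
  let t : ℝ → ℝ := fun u => if d ≤ u then d / u else 1
  have ht0 : ∀ u, 0 ≤ t u := by
    intro u; simp only [t]; split_ifs with h
    · have : 0 < u := hd.trans_le h
      positivity
    · norm_num
  have ht1 : ∀ u, t u ≤ 1 := by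
    intro u; simp only [t]; split_ifs with h
    · have : 0 < u := hd.trans_le h
      rw [div_le_one this]; exact h
    · norm_num
  have htd : ∀ u, u ≤ 1 → d ≤ t u := by
    intro u hu; simp only [t]; split_ifs with h
    · have : 0 < u := hd.trans_le h
      rw [le_div_iff₀ this]; nlinarith
    · exact hd1
  obtain ⟨a, b, l, ha, hb, hl, hbox⟩ := energy Ω hN e he0 he1 t ht0 ht1 α hα K hK
  set μ : V × V × C → ℝ := fun ω => fmean Ω (trip a b l) e (trip a b l ω) with hμ
  have hμ0 : ∀ ω, 0 ≤ μ ω := by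
    intro ω
    simp only [hμ, fmean]
    exact div_nonneg (Finset.sum_nonneg fun _ _ => he0 _) (by positivity)
  have hμ1 : ∀ ω, μ ω ≤ 1 := by
    intro ω
    simp only [hμ, fmean]
    apply div_le_one_of_le₀ _ (by positivity)
    calc _ ≤ ∑ ω' ∈ Ω.filter (fun ω' => trip a b l ω' = trip a b l ω), (1 : ℝ) :=
          Finset.sum_le_sum fun ω' _ => he1 ω'
      _ = _ := by simp
  -- bad points
  let Xb := X.filter (fun x => ((X.filter (fun x' => a x' = a x)).card : ℝ) < ε * X.card)
  let Yb := Y.filter (fun x => ((Y.filter (fun x' => b x' = b x)).card : ℝ) < ε * Y.card)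
  let Zb := Z.filter (fun x => ((Z.filter (fun x' => l x' = l x)).card : ℝ) < ε * Z.card)
  have cX := small_count X a (2 ^ K) ha ε hε.le
  have cY := small_count Y b (2 ^ K) hb ε hε.le
  have cZ := small_count Z l (2 ^ K) hl ε hε.le
  have hbadsub : Ω.filter (fun ω => μ ω < d) ⊆
      (Xb ×ˢ Y ×ˢ Z) ∪ ((X ×ˢ Yb ×ˢ Z) ∪ (X ×ˢ Y ×ˢ Zb)) := by
    rintro ⟨x, y, c⟩ hω
    obtain ⟨hm, hlt⟩ := Finset.mem_filter.1 hω
    simp only [hΩ, Finset.mem_product] at hm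
    by_contra hnot
    simp only [Finset.mem_union, Finset.mem_product, Xb, Yb, Zb, Finset.mem_filter, hm.1, hm.2.1,
      hm.2.2, true_and, and_true, not_or, not_lt] at hnot
    have hh := hhalf _ (Finset.filter_subset _ _) _ (Finset.filter_subset _ _) _
      (Finset.filter_subset _ _) hnot.1 hnot.2.1 hnot.2.2
    have heq : (X.filter (fun x' => a x' = a x)) ×ˢ (Y.filter (fun x' => b x' = b y)) ×ˢ
        (Z.filter (fun x' => l x' = l c)) =
        Ω.filter (fun ω' => trip a b l ω' = trip a b l (x, y, c)) := by
      ext ⟨x', y', c'⟩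
      simp only [hΩ, trip, Finset.mem_product, Finset.mem_filter, Prod.mk.injEq]
      tauto
    rw [heq] at hh
    have hpos : 0 < ((Ω.filter (fun ω' => trip a b l ω' = trip a b l (x, y, c))).card : ℝ) := by
      have : 0 < (Ω.filter (fun ω' => trip a b l ω' = trip a b l (x, y, c))).card :=
        Finset.card_pos.2 ⟨(x, y, c), Finset.mem_filter.2 ⟨by
          simp only [hΩ, Finset.mem_product]; exact hm, rfl⟩⟩
      exact_mod_cast this
    have : d ≤ μ (x, y, c) := by
      simp only [hμ, fmean]
      rw [le_div_iff₀ hpos]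
      exact hh
    linarith
  have hNeq : ((Ω.card : ℕ) : ℝ) = X.card * (Y.card * Z.card) := by
    rw [hΩ]; simp
  have hbad : ((Ω.filter (fun ω => μ ω < d)).card : ℝ) ≤ α * Ω.card := by
    have h1 := Finset.card_le_card hbadsub
    have h2 := Finset.card_union_le (Xb ×ˢ Y ×ˢ Z) ((X ×ˢ Yb ×ˢ Z) ∪ (X ×ˢ Y ×ˢ Zb))
    have h3 := Finset.card_union_le (X ×ˢ Yb ×ˢ Z) (X ×ˢ Y ×ˢ Zb)
    have h4 : ((Ω.filter (fun ω => μ ω < d)).card : ℝ) ≤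
        ((Xb ×ˢ Y ×ˢ Z).card : ℝ) + (((X ×ˢ Yb ×ˢ Z).card : ℝ) + ((X ×ˢ Y ×ˢ Zb).card : ℝ)) := by
      exact_mod_cast h1.trans (h2.trans (by omega))
    simp only [Finset.card_product] at h4
    push_cast at h4 cX cY cZ
    refine h4.trans ?_
    rw [hNeq]
    calc (Xb.card : ℝ) * (Y.card * Z.card) + (X.card * (Yb.card * Z.card)
          + X.card * (Y.card * Zb.card))
        ≤ (2 ^ K * (ε * X.card)) * (Y.card * Z.card) + (X.card * ((2 ^ K * (ε * Y.card)) * Z.card)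
          + X.card * (Y.card * (2 ^ K * (ε * Z.card)))) := by gcongr
      _ = (3 * 2 ^ K * ε) * (X.card * (Y.card * Z.card)) := by ring
      _ ≤ _ := by gcongr
  refine ⟨fun ω => e ω * t (μ ω), ?_, ?_, ?_, ?_⟩
  · intro ω _
    have := htd _ (hμ1 ω)
    nlinarith [he0 ω]
  · intro ω; exact mul_nonneg (he0 _) (ht0 _)
  · intro ω; nlinarith [he0 ω, ht1 (μ ω)]
  · intro A hA B hB S hS
    have hsub : A ×ˢ B ×ˢ S ⊆ Ω :=
      Finset.product_subset_product hA (Finset.product_subset_product hB hS)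
    have h1 := hbox A B S
    have h2 : ∑ ω ∈ Ω, (e ω - μ ω) * (t (μ ω) * if ω ∈ A ×ˢ B ×ˢ S then 1 else 0)
        = ∑ ω ∈ A ×ˢ B ×ˢ S, (e ω - μ ω) * t (μ ω) := by
      rw [← Finset.sum_subset hsub]
      · apply Finset.sum_congr rfl
        intro ω hω; simp [hω]
      · intro ω _ hω; simp [hω]
    change |∑ ω ∈ Ω, (e ω - μ ω) * (t (μ ω) * if ω ∈ A ×ˢ B ×ˢ S then 1 else 0)| ≤ _ at h1
    rw [h2] at h1
    have h3 : ∑ ω ∈ A ×ˢ B ×ˢ S, e ω * t (μ ω) - d * ((A ×ˢ B ×ˢ S).card : ℝ)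
        = ∑ ω ∈ A ×ˢ B ×ˢ S, (e ω - μ ω) * t (μ ω)
          + ∑ ω ∈ A ×ˢ B ×ˢ S, (μ ω * t (μ ω) - d) := by
      rw [mul_comm d, ← nsmul_eq_mul, ← Finset.sum_const, ← Finset.sum_sub_distrib,
        ← Finset.sum_add_distrib]
      apply Finset.sum_congr rfl
      intro ω _; ring
    have h4 : |∑ ω ∈ A ×ˢ B ×ˢ S, (μ ω * t (μ ω) - d)| ≤ α * Ω.card := by
      refine (Finset.abs_sum_le_sum_abs _ _).trans (le_trans ?_ hbad)
      calc ∑ ω ∈ A ×ˢ B ×ˢ S, |μ ω * t (μ ω) - d|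
          ≤ ∑ ω ∈ Ω, |μ ω * t (μ ω) - d| :=
            Finset.sum_le_sum_of_subset_of_nonneg hsub (fun _ _ _ => abs_nonneg _)
        _ ≤ ∑ ω ∈ Ω, (if μ ω < d then (1 : ℝ) else 0) := by
            apply Finset.sum_le_sum
            intro ω _
            have := hμ0 ω
            by_cases hlt : μ ω < d
            · have : t (μ ω) = 1 := by simp [t, not_le.2 hlt]
              rw [this, if_pos hlt, abs_le]
              constructor <;> linarith
            · have hle : d ≤ μ ω := not_lt.1 hlt
              have : t (μ ω) = d / μ ω := by simp only [t, if_pos hle]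
              have hp : 0 < μ ω := hd.trans_le hle
              rw [this, if_neg hlt, mul_div_cancel₀ _ hp.ne']
              simp
        _ = _ := by simp
    rw [h3]
    refine (abs_add_le _ _).trans ?_
    linarith

lemma trip_sum {V C : Type*} (A B : Finset V) (S : Finset C) (F : V × V × C → ℝ) :
    ∑ ω ∈ A ×ˢ B ×ˢ S, F ω = ∑ c ∈ S, ∑ i ∈ A ×ˢ B, F (i.1, i.2, c) := by
  rw [Finset.sum_comm, Finset.sum_product, Finset.sum_product]
  apply Finset.sum_congr rfl
  intro x _
  rw [Finset.sum_product]

lemma pairCount_sum {V : Type*} (G : SimpleGraph V) (A B : Finset V) :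
    (pairCount G A B : ℝ) = ∑ i ∈ A ×ˢ B, if G.Adj i.1 i.2 then (1 : ℝ) else 0 := by
  simp [pairCount]

lemma degIn_sum {V : Type*} (G : SimpleGraph V) (v : V) (B : Finset V) :
    (degIn G v B : ℝ) = ∑ y ∈ B, if G.Adj v y then (1 : ℝ) else 0 := by
  simp [degIn]

set_option maxHeartbeats 1000000 in
lemma pair_main {V C : Type*} (X Y : Finset V) (hdisj : Disjoint X Y) (D : Finset C)
    (hD : D.Nonempty) (G : C → SimpleGraph V) (d ε' α η ε : ℝ) (hd : 0 < d) (hε'0 : 0 < ε')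
    (hε'1 : ε' ≤ 1) (hα : α = ε' ^ 4 / 12) (hη : 0 < η) (hη1 : η ≤ 1) (hηα : η ≤ α)
    (hηd : η ≤ d ^ 2 / 2) (hε : 0 < ε) (K : ℕ) (hK : 1 < K * α ^ 2) (hεK : 3 * 2 ^ K * ε ≤ α)
    (hX : 12 ≤ η ^ 2 / 4 * X.card) (hY : 12 ≤ η ^ 2 / 4 * Y.card)
    (hXY : 3 * (X.card : ℝ) < Real.exp (η ^ 2 / 4 * Y.card))
    (hYX : 3 * (Y.card : ℝ) < Real.exp (η ^ 2 / 4 * X.card))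
    (hG : ColHalfSuperReg ε d G X Y D) :
    ∃ G' : C → SimpleGraph V, (∀ c, G' c ≤ G c) ∧ ColSuperReg ε' (d ^ 2 / 2) G' X Y D := by
  obtain ⟨hG1, hG2, hG3, hG4⟩ := hG
  have hpos : ∀ N : ℕ, 12 ≤ η ^ 2 / 4 * (N : ℝ) → (0 : ℝ) < N := by
    intro N hN
    by_contra hc
    nlinarith [sq_nonneg η]
  have hXp := hpos _ hX
  have hYp := hpos _ hY
  have hDp : (0 : ℝ) < D.card := by exact_mod_cast hD.card_pos
  have hα0 : 0 < α := by rw [hα]; positivity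
  have hd1 : d ≤ 1 := by
    obtain ⟨c, hc⟩ := hD
    have h1 := hG4 c hc
    have h2 : (pairCount (G c) X Y : ℝ) ≤ X.card * Y.card := by
      have : pairCount (G c) X Y ≤ X.card * Y.card := by
        rw [← Finset.card_product]; exact Finset.card_filter_le _ _
      exact_mod_cast this
    by_contra hc
    have : (0 : ℝ) < X.card * Y.card := by positivity
    nlinarith
  let e : V × V × C → ℝ := fun ω => if (G ω.2.2).Adj ω.1 ω.2.1 then 1 else 0
  have he0 : ∀ ω, 0 ≤ e ω := by intro ω; simp only [e]; split_ifs <;> norm_num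
  have he1 : ∀ ω, e ω ≤ 1 := by intro ω; simp only [e]; split_ifs <;> norm_num
  have hNeq : (((X ×ˢ Y ×ˢ D).card : ℕ) : ℝ) = X.card * (Y.card * D.card) := by simp
  obtain ⟨w, hwd, hw0, hwe, hwbox⟩ := weights X Y D
    (by have : (0 : ℝ) < (((X ×ˢ Y ×ˢ D).card : ℕ) : ℝ) := by rw [hNeq]; positivity
        exact_mod_cast this) e he0 he1 α d ε hα0 hd hd1 hε K hK hεK (by
    intro A hA B hB S hS h1 h2 h3
    have := hG1 A hA B hB S hS h1 h2 h3
    rw [trip_sum]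
    simp only [pairCount_sum] at this
    refine le_trans (le_of_eq ?_) this
    simp only [Finset.card_product]
    push_cast
    ring)
  have hround : ∀ c : C, ∃ h : V × V → ℝ, (∀ i, h i = 0 ∨ (h i = 1 ∧ w (i.1, i.2, c) ≠ 0)) ∧
      (∀ A ⊆ X, ∀ B ⊆ Y, |∑ i ∈ A ×ˢ B, (h i - w (i.1, i.2, c))| ≤ η * (X.card * Y.card)) ∧
      (∀ x ∈ X, ∑ y ∈ Y, w (x, y, c) - η * Y.card ≤ ∑ y ∈ Y, h (x, y)) ∧
      (∀ y ∈ Y, ∑ x ∈ X, w (x, y, c) - η * X.card ≤ ∑ x ∈ X, h (x, y)) := fun c =>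
    round_bip X Y (fun i => w (i.1, i.2, c)) (fun i => hw0 _) (fun i => (hwe _).trans (he1 _))
      η hη hη1 hX hY hXY hYX
  choose h hh hbox hdx hdy using hround
  obtain ⟨G', hG'⟩ : ∃ G' : C → SimpleGraph V, ∀ c x y, (G' c).Adj x y ↔ (G c).Adj x y ∧
      ((h c (x, y) = 1 ∧ x ∈ X ∧ y ∈ Y) ∨ (h c (y, x) = 1 ∧ y ∈ X ∧ x ∈ Y)) := ⟨fun c =>
    { Adj := fun x y => (G c).Adj x y ∧
        ((h c (x, y) = 1 ∧ x ∈ X ∧ y ∈ Y) ∨ (h c (y, x) = 1 ∧ y ∈ X ∧ x ∈ Y))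
      symm := ⟨fun x y hxy => ⟨hxy.1.symm, hxy.2.symm⟩⟩
      loopless := ⟨fun x hx => (G c).loopless.irrefl x hx.1⟩ }, fun c x y => Iff.rfl⟩
  have hind : ∀ c, ∀ x ∈ X, ∀ y ∈ Y, (if (G' c).Adj x y then (1 : ℝ) else 0) = h c (x, y) := by
    intro c x hx y hy
    have hyX : y ∉ X := fun hyX => Finset.disjoint_left.1 hdisj hyX hy
    rcases hh c (x, y) with h0 | ⟨h1, hw⟩
    · rw [if_neg, h0]
      rw [hG']
      rintro ⟨_, h2 | h2⟩
      · rw [h0] at h2; exact zero_ne_one h2.1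
      · exact hyX h2.2.1
    · rw [if_pos, h1]
      rw [hG']
      refine ⟨?_, Or.inl ⟨h1, hx, hy⟩⟩
      by_contra hn
      have h3 := hwe (x, y, c)
      have h4 := hw0 (x, y, c)
      simp only [e, if_neg hn] at h3
      exact hw (le_antisymm h3 h4)
  have hpc : ∀ c, ∀ A ⊆ X, ∀ B ⊆ Y, (pairCount (G' c) A B : ℝ) = ∑ i ∈ A ×ˢ B, h c i := by
    intro c A hA B hB
    rw [pairCount_sum]
    apply Finset.sum_congr rfl
    intro i hi
    obtain ⟨hi1, hi2⟩ := Finset.mem_product.1 hi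
    exact hind c i.1 (hA hi1) i.2 (hB hi2)
  have hdegx : ∀ c, ∀ x ∈ X, (degIn (G' c) x Y : ℝ) = ∑ y ∈ Y, h c (x, y) := by
    intro c x hx
    rw [degIn_sum]
    exact Finset.sum_congr rfl fun y hy => hind c x hx y hy
  have hdegy : ∀ c, ∀ y ∈ Y, (degIn (G' c) y X : ℝ) = ∑ x ∈ X, h c (x, y) := by
    intro c y hy
    rw [degIn_sum]
    apply Finset.sum_congr rfl
    intro x hx
    rw [← hind c x hx y hy]
    simp only [SimpleGraph.adj_comm]
  have hpair : ∀ c ∈ D, d ^ 2 / 2 * (X.card : ℝ) * (Y.card : ℝ) ≤ (pairCount (G' c) X Y : ℝ) := by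
    intro c hc
    rw [hpc c X (Finset.Subset.refl _) Y (Finset.Subset.refl _)]
    have h1 := (abs_le.1 (hbox c X (Finset.Subset.refl _) Y (Finset.Subset.refl _))).1
    rw [Finset.sum_sub_distrib] at h1
    have h2 : d * (pairCount (G c) X Y : ℝ) ≤ ∑ i ∈ X ×ˢ Y, w (i.1, i.2, c) := by
      rw [pairCount_sum, Finset.mul_sum]
      apply Finset.sum_le_sum
      intro i hi
      obtain ⟨hi1, hi2⟩ := Finset.mem_product.1 hi
      exact hwd (i.1, i.2, c) (by simp [hi1, hi2, hc])
    have h3 := mul_le_mul_of_nonneg_left (hG4 c hc) hd.le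
    have h4 : η * ((X.card : ℝ) * Y.card) ≤ d ^ 2 / 2 * ((X.card : ℝ) * Y.card) := by gcongr
    nlinarith
  -- box estimate
  have hB : ∀ A ⊆ X, ∀ B ⊆ Y, ∀ S ⊆ D,
      |∑ c ∈ S, (pairCount (G' c) A B : ℝ) - d * (S.card * A.card * B.card)|
        ≤ ε' ^ 4 / 4 * (D.card * X.card * Y.card) := by
    intro A hA B hB S hS
    have h1 := hwbox A hA B hB S hS
    rw [trip_sum] at h1
    have h2 : |∑ c ∈ S, ∑ i ∈ A ×ˢ B, (h c i - w (i.1, i.2, c))| ≤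
        α * (D.card * X.card * Y.card) := by
      calc |∑ c ∈ S, ∑ i ∈ A ×ˢ B, (h c i - w (i.1, i.2, c))|
          ≤ ∑ c ∈ S, |∑ i ∈ A ×ˢ B, (h c i - w (i.1, i.2, c))| := Finset.abs_sum_le_sum_abs _ _
        _ ≤ ∑ c ∈ S, η * (X.card * Y.card) := Finset.sum_le_sum fun c _ => hbox c A hA B hB
        _ = S.card * (η * (X.card * Y.card)) := by simp
        _ ≤ D.card * (α * (X.card * Y.card)) := by
            have : (S.card : ℝ) ≤ D.card := by exact_mod_cast Finset.card_le_card hS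
            gcongr
        _ = _ := by ring
    have h3 : ∑ c ∈ S, (pairCount (G' c) A B : ℝ) - d * (S.card * A.card * B.card)
        = ∑ c ∈ S, ∑ i ∈ A ×ˢ B, (h c i - w (i.1, i.2, c)) +
          (∑ c ∈ S, ∑ i ∈ A ×ˢ B, w (i.1, i.2, c) - d * ((A ×ˢ B ×ˢ S).card : ℝ)) := by
      have : ∑ c ∈ S, (pairCount (G' c) A B : ℝ) = ∑ c ∈ S, ∑ i ∈ A ×ˢ B, h c i :=
        Finset.sum_congr rfl fun c _ => hpc c A hA B hB
      rw [this]
      simp only [Finset.sum_sub_distrib, Finset.card_product]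
      push_cast
      ring
    rw [h3]
    refine (abs_add_le _ _).trans ?_
    rw [hNeq] at h1
    rw [hα] at h1 h2
    linarith
  have hdens : ∀ A ⊆ X, ∀ B ⊆ Y, ∀ S ⊆ D, ε' * (X.card : ℝ) ≤ A.card →
      ε' * (Y.card : ℝ) ≤ B.card → ε' * (D.card : ℝ) ≤ S.card →
      |colDensity G' A B S - d| ≤ ε' / 4 := by
    intro A hA B hB' S hS h1 h2 h3
    have hA0 : (0 : ℝ) < A.card := lt_of_lt_of_le (by positivity) h1
    have hB0 : (0 : ℝ) < B.card := lt_of_lt_of_le (by positivity) h2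
    have hS0 : (0 : ℝ) < S.card := lt_of_lt_of_le (by positivity) h3
    have hQ : (0 : ℝ) < (S.card : ℝ) * A.card * B.card := by positivity
    have h4 := hB A hA B hB' S hS
    have h5 : colDensity G' A B S - d =
        (∑ c ∈ S, (pairCount (G' c) A B : ℝ) - d * (S.card * A.card * B.card)) /
          ((S.card : ℝ) * A.card * B.card) := by
      unfold colDensity
      rw [sub_div, mul_div_cancel_right₀ _ hQ.ne']
    rw [h5, abs_div, abs_of_pos hQ, div_le_iff₀ hQ]
    refine h4.trans ?_
    calc ε' ^ 4 / 4 * ((D.card : ℝ) * X.card * Y.card)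
        = ε' / 4 * ((ε' * D.card) * (ε' * X.card) * (ε' * Y.card)) := by ring
      _ ≤ _ := by gcongr
  have hself : ∀ n : ℝ, 0 < n → ε' * n ≤ n := fun n hn => by nlinarith
  have hfull := hdens X (Finset.Subset.refl _) Y (Finset.Subset.refl _) D (Finset.Subset.refl _)
    (hself _ hXp) (hself _ hYp) (hself _ hDp)
  refine ⟨G', fun c x y hxy => ((hG' c x y).1 hxy).1, ⟨?_, ?_⟩, ?_, ?_, hpair⟩
  · unfold colDensity
    rw [le_div_iff₀ (by positivity)]
    calc d ^ 2 / 2 * ((D.card : ℝ) * X.card * Y.card)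
        = ∑ c ∈ D, d ^ 2 / 2 * (X.card : ℝ) * (Y.card : ℝ) := by
          rw [Finset.sum_const, nsmul_eq_mul]; ring
      _ ≤ _ := Finset.sum_le_sum hpair
  · intro A hA B hB' S hS h1 h2 h3
    have h4 := abs_le.1 (hdens A hA B hB' S hS h1 h2 h3)
    have h5 := abs_le.1 hfull
    rw [abs_lt]
    constructor <;> linarith [h4.1, h4.2, h5.1, h5.2]
  · intro x hx
    have h1 := mul_le_mul_of_nonneg_left (hG2 x hx) hd.le
    have h2 : d * ∑ c ∈ D, (degIn (G c) x Y : ℝ) - D.card * (η * Y.card) ≤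
        ∑ c ∈ D, (degIn (G' c) x Y : ℝ) := by
      rw [Finset.mul_sum, ← nsmul_eq_mul, ← Finset.sum_const, ← Finset.sum_sub_distrib]
      apply Finset.sum_le_sum
      intro c hc
      rw [hdegx c x hx]
      refine le_trans ?_ (hdx c x hx)
      rw [degIn_sum, Finset.mul_sum]
      have : ∑ y ∈ Y, d * (if (G c).Adj x y then (1 : ℝ) else 0) ≤ ∑ y ∈ Y, w (x, y, c) :=
        Finset.sum_le_sum fun y hy => hwd (x, y, c) (by simp [hx, hy, hc])
      linarith
    have h4 : (D.card : ℝ) * (η * Y.card) ≤ D.card * (d ^ 2 / 2 * Y.card) := by gcongr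
    nlinarith
  · intro y hy
    have h1 := mul_le_mul_of_nonneg_left (hG3 y hy) hd.le
    have h2 : d * ∑ c ∈ D, (degIn (G c) y X : ℝ) - D.card * (η * X.card) ≤
        ∑ c ∈ D, (degIn (G' c) y X : ℝ) := by
      rw [Finset.mul_sum, ← nsmul_eq_mul, ← Finset.sum_const, ← Finset.sum_sub_distrib]
      apply Finset.sum_le_sum
      intro c hc
      rw [hdegy c y hy]
      refine le_trans ?_ (hdy c y hy)
      rw [degIn_sum, Finset.mul_sum]
      have : ∑ x ∈ X, d * (if (G c).Adj y x then (1 : ℝ) else 0) ≤ ∑ x ∈ X, w (x, y, c) :=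
        Finset.sum_le_sum fun x hx => by
          have := hwd (x, y, c) (by simp [hx, hy, hc])
          simpa only [e, SimpleGraph.adj_comm] using this
      linarith
    have h4 : (D.card : ℝ) * (η * X.card) ≤ D.card * (d ^ 2 / 2 * X.card) := by gcongr
    nlinarith

lemma pairCount_symm {V : Type*} (G : SimpleGraph V) (A B : Finset V) :
    pairCount G A B = pairCount G B A := by
  have : (pairCount G A B : ℝ) = pairCount G B A := by
    rw [pairCount_sum, pairCount_sum, Finset.sum_product, Finset.sum_product_right]
    simp only [SimpleGraph.adj_comm]
  exact_mod_cast this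

lemma colDensity_symm {V C : Type*} (G : C → SimpleGraph V) (A B : Finset V) (D : Finset C) :
    colDensity G A B D = colDensity G B A D := by
  unfold colDensity
  simp only [pairCount_symm _ A B]
  congr 1
  ring

lemma ColSuperReg.swap {V C : Type*} {ε d : ℝ} {G : C → SimpleGraph V} {X Y : Finset V}
    {D : Finset C} (h : ColSuperReg ε d G X Y D) : ColSuperReg ε d G Y X D := by
  obtain ⟨⟨h1, h2⟩, h3, h4, h5⟩ := h
  refine ⟨⟨?_, ?_⟩, h4, h3, ?_⟩
  · rwa [colDensity_symm]
  · intro A hA B hB S hS a b c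
    rw [colDensity_symm G A, colDensity_symm G Y]
    exact h2 B hB A hA S hS b a c
  · intro c hc
    rw [pairCount_symm]
    have := h5 c hc
    linarith

theorem stmt11 (r : ℕ) (hr : 2 ≤ r) (d δ : ℝ) (hd : 0 < d) (hδ : 0 < δ) :
    ∃ ε'₀ : ℝ, 0 < ε'₀ ∧ ∀ ε' : ℝ, 0 < ε' → ε' ≤ ε'₀ →
    ∃ (ε : ℝ) (m₀ : ℕ), 0 < ε ∧
    ∀ m : ℕ, m₀ ≤ m →
    ∀ (V : Type) (C : Type) (T : GTemplate V C r),
      T.IsHalfSuperParam (m : ℝ) ε d δ →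
      ∃ T' : GTemplate V C r, T'.R = T.R ∧ T'.Vc = T.Vc ∧ T'.Cc = T.Cc ∧
        (∀ c i j, T'.Ge c i j ≤ T.Ge c i j) ∧
        T'.IsSuperParam (m : ℝ) ε' (d ^ 2 / 2) δ := by
  refine ⟨1, one_pos, fun ε' hε'0 hε'1 => ?_⟩
  set α : ℝ := ε' ^ 4 / 12 with hα
  have hα0 : 0 < α := by positivity
  set η : ℝ := min 1 (min α (d ^ 2 / 2)) with hη
  have hη0 : 0 < η := by
    rw [hη]; exact lt_min one_pos (lt_min hα0 (by positivity))
  have hη1 : η ≤ 1 := min_le_left _ _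
  have hηα : η ≤ α := (min_le_right _ _).trans (min_le_left _ _)
  have hηd : η ≤ d ^ 2 / 2 := (min_le_right _ _).trans (min_le_right _ _)
  obtain ⟨K, hK⟩ := exists_nat_gt (1 / α ^ 2)
  have hK' : 1 < K * α ^ 2 := by rwa [div_lt_iff₀ (by positivity)] at hK
  set κ : ℝ := η ^ 2 / 4 with hκ
  have hκ0 : 0 < κ := by positivity
  obtain ⟨m₀, hm₀⟩ := exists_nat_gt (max (12 / κ) (6 / (δ * κ ^ 2)))
  refine ⟨α / (3 * 2 ^ K), m₀, by positivity, ?_⟩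
  intro m hm V C T hT
  obtain ⟨hV, hC, hreg⟩ := hT
  have hmm : (m₀ : ℝ) ≤ m := by exact_mod_cast hm
  have hm1 : 12 / κ < m := (le_max_left _ _).trans_lt (hm₀.trans_le hmm)
  have hm2 : 6 / (δ * κ ^ 2) < m := (le_max_right _ _).trans_lt (hm₀.trans_le hmm)
  have hmpos : (0 : ℝ) < m := lt_trans (by positivity) hm1
  rw [div_lt_iff₀ (by positivity)] at hm1 hm2
  have hsz : ∀ i, 12 ≤ κ * ((T.Vc i).card : ℝ) := by
    intro i
    have := mul_le_mul_of_nonneg_left (hV i).1 hκ0.le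
    linarith
  have hexp : ∀ i j, 3 * ((T.Vc i).card : ℝ) < Real.exp (κ * ((T.Vc j).card : ℝ)) := by
    intro i j
    have h1 : κ * m ≤ κ * ((T.Vc j).card : ℝ) := mul_le_mul_of_nonneg_left (hV j).1 hκ0.le
    refine lt_of_lt_of_le ?_ (Real.exp_le_exp.2 h1)
    have h2 := Real.quadratic_le_exp_of_nonneg (x := κ * m) (by positivity)
    have h3 := (hV i).2
    rw [le_div_iff₀ hδ] at h3
    have h4 : 3 * ((T.Vc i).card : ℝ) * δ < ((κ * m) ^ 2 / 2) * δ := by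
      have := mul_lt_mul_of_pos_right hm2 hmpos
      nlinarith
    have h5 := lt_of_mul_lt_mul_right h4 hδ.le
    have : 0 < κ * m := by positivity
    linarith
  have key : ∀ i j, ∃ G' : C → SimpleGraph V, (∀ c, G' c ≤ T.Ge c i j) ∧
      (T.R.Adj i j → ColSuperReg ε' (d ^ 2 / 2) G' (T.Vc i) (T.Vc j) (T.Cc i j)) := by
    intro i j
    by_cases hij : T.R.Adj i j
    · have hne : (T.Cc i j).Nonempty := by
        rw [← Finset.card_pos]
        have h1 := hC i j hij
        have h2 : 0 < δ * (m : ℝ) := by positivity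
        exact_mod_cast h2.trans_le h1
      obtain ⟨G', h1, h2⟩ := pair_main (T.Vc i) (T.Vc j) (T.Vc_disj i j hij.ne) (T.Cc i j) hne
        (fun c => T.Ge c i j) d ε' α η (α / (3 * 2 ^ K)) hd hε'0 hε'1 hα hη0 hη1 hηα hηd
        (by positivity) K hK' (le_of_eq (by field_simp)) (hsz i) (hsz j) (hexp i j) (hexp j i)
        (hreg i j hij)
      exact ⟨G', h1, fun _ => h2⟩
    · exact ⟨fun _ => ⊥, fun _ => bot_le, fun h => absurd h hij⟩
  choose F hF1 hF2 using key
  let Ge' : C → Fin r → Fin r → SimpleGraph V := fun c i j => if i ≤ j then F i j c else F j i c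
  have hle : ∀ c i j, Ge' c i j ≤ T.Ge c i j := by
    intro c i j
    simp only [Ge']
    split_ifs
    · exact hF1 i j c
    · rw [T.Ge_symm c i j]; exact hF1 j i c
  refine ⟨{ R := T.R, Vc := T.Vc, Cc := T.Cc, Ge := Ge', Cc_symm := T.Cc_symm,
            Ge_symm := ?_, Vc_disj := T.Vc_disj, Cc_support := T.Cc_support,
            Ge_support := ?_, Ge_bipartite := ?_ }, rfl, rfl, rfl, hle, hV, hC, ?_⟩
  · intro c i j
    simp only [Ge']
    rcases lt_trichotomy i j with h | h | h
    · rw [if_pos h.le, if_neg (not_le.2 h)]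
    · subst h; rfl
    · rw [if_neg (not_le.2 h), if_pos h.le]
  · intro c i j hc
    have := hle c i j
    rw [T.Ge_support c i j hc] at this
    exact le_bot_iff.1 this
  · intro c i j x y hxy
    exact T.Ge_bipartite c i j x y (hle c i j hxy)
  · intro i j hij
    by_cases h : i ≤ j
    · have : (fun c => Ge' c i j) = F i j := by
        funext c; simp only [Ge', if_pos h]
      simp only [this]
      exact hF2 i j hij
    · have : (fun c => Ge' c i j) = F j i := by
        funext c; simp only [Ge', if_neg h]
      simp only [this]
      have h2 := (hF2 j i hij.symm).swap
      rwa [T.Cc_symm j i] at h2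
end
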